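/- (Exterior limit of the normal derivative of the prolate spheroidal single layer potential.) Fix a > 0, u₀ > 1, and integers n ≥ 0, 0 ≤ m ≤ n. Let the density be σ(s,t) = Y_n^m(s,t)/√(u₀^2−s^2). Fix v ∈ (−1,1) and φ ∈ ℝ. Then the normal-direction derivative of the single layer potential, evaluated along the exterior normal approach, satisfies lim_{u→u₀⁺} [ (∂_uΦ(u,v,φ)/‖∂_uΦ(u,v,φ)‖) · (∇S[σ])(Φ(u,v,φ)) ] = ((n−m)!/(n+m)!)·(−1)^m·(u₀^2−1)·P_n^m(u₀)·(Q_n^m)′(u₀)·Y_n^m(v,φ)/√(u₀^2−v^2), where ∇ denotes the Euclidean gradient in ℝ^3 and · the Euclidean inner product. -/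

import Mathlib

noncomputable section

open Real MeasureTheory

/-- Legendre polynomial via Rodrigues' formula. -/
def legendreP (n : ℕ) (x : ℝ) : ℝ :=
  (1 / (2 ^ n * (n.factorial : ℝ))) * iteratedDeriv n (fun y : ℝ => (y ^ 2 - 1) ^ n) x

/-- Legendre function of the second kind (Neumann's integral), for `x > 1`. -/
def legendreQ (n : ℕ) (x : ℝ) : ℝ :=
  (1 / 2) * ∫ t in (-1 : ℝ)..1, legendreP n t / (x - t)

/-- Associated Legendre function of the first kind, off the cut (`x > 1`). -/
def assocP (n m : ℕ) (x : ℝ) : ℝ :=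
  Real.sqrt (x ^ 2 - 1) ^ m * iteratedDeriv m (legendreP n) x

/-- Associated Legendre function of the second kind, off the cut (`x > 1`). -/
def assocQ (n m : ℕ) (x : ℝ) : ℝ :=
  Real.sqrt (x ^ 2 - 1) ^ m * iteratedDeriv m (legendreQ n) x

/-- Ferrers function of the first kind, on the cut (`-1 ≤ v ≤ 1`). -/
def ferrersP (n m : ℕ) (v : ℝ) : ℝ :=
  Real.sqrt (1 - v ^ 2) ^ m * iteratedDeriv m (legendreP n) v

/-- Prolate spheroidal coordinate map. -/
def prolate (a u v φ : ℝ) : EuclideanSpace ℝ (Fin 3) :=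
  (WithLp.equiv 2 (Fin 3 → ℝ)).symm
    ![a * Real.sqrt (u ^ 2 - 1) * Real.sqrt (1 - v ^ 2) * Real.cos φ,
      a * Real.sqrt (u ^ 2 - 1) * Real.sqrt (1 - v ^ 2) * Real.sin φ,
      a * u * v]

/-- Surface spheroidal (= spherical) harmonic `Y_n^m(v, φ)`. -/
def sphY (n m : ℕ) (v φ : ℝ) : ℂ :=
  ((Real.sqrt ((2 * (n : ℝ) + 1) / (4 * Real.pi)) *
      Real.sqrt (((n - m).factorial : ℝ) / ((n + m).factorial : ℝ)) * ferrersP n m v : ℝ) : ℂ) *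
    Complex.exp (Complex.I * m * φ)

/-- Outward unit normal on the prolate spheroid `u = u₀`, at surface parameters `(s, t)`. -/
def unitNormalP (a u₀ s t : ℝ) : EuclideanSpace ℝ (Fin 3) :=
  ‖deriv (fun w => prolate a w s t) u₀‖⁻¹ • deriv (fun w => prolate a w s t) u₀

/-- Surface area element on the prolate spheroid `u = u₀`. -/
def areaElemP (a u₀ s : ℝ) : ℝ := a ^ 2 * Real.sqrt (u₀ ^ 2 - s ^ 2) * Real.sqrt (u₀ ^ 2 - 1)

/-- Laplace single layer potential on the prolate spheroid `u = u₀`. -/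
def singleLayerP (a u₀ : ℝ) (σ : ℝ → ℝ → ℂ) (x : EuclideanSpace ℝ (Fin 3)) : ℂ :=
  ∫ t in (0 : ℝ)..(2 * Real.pi), ∫ s in (-1 : ℝ)..1,
    ((areaElemP a u₀ s / (4 * Real.pi * ‖x - prolate a u₀ s t‖) : ℝ) : ℂ) * σ s t

/-- Unnormalised Rodrigues polynomial and its derivatives. -/
def rodP (n : ℕ) : Polynomial ℝ := (Polynomial.X ^ 2 - 1) ^ n

/-- The `m`-th derivative of the Legendre polynomial, as a polynomial. -/
def legD (n m : ℕ) : Polynomial ℝ :=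
  Polynomial.C (1 / (2 ^ n * (n.factorial : ℝ))) * Polynomial.derivative^[n + m] (rodP n)

lemma iteratedDeriv_poly (q : Polynomial ℝ) (k : ℕ) :
    iteratedDeriv k (fun x => q.eval x) = fun x => (Polynomial.derivative^[k] q).eval x := by
  induction k with
  | zero => simp
  | succ k ih =>
    rw [iteratedDeriv_succ, ih, Function.iterate_succ_apply']
    funext x
    exact Polynomial.deriv _

lemma legendreP_eq (n : ℕ) : legendreP n = fun x => (legD n 0).eval x := by
  funext x
  have h : (fun y : ℝ => (y ^ 2 - 1) ^ n) = fun y => (rodP n).eval y := by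
    funext y; simp [rodP]
  simp only [legendreP, legD, h, iteratedDeriv_poly, Polynomial.eval_mul, Polynomial.eval_C,
    Nat.add_zero]

lemma legD_derivative (n m : ℕ) : Polynomial.derivative (legD n m) = legD n (m + 1) := by
  simp only [legD, Polynomial.derivative_C_mul, ← Function.iterate_succ_apply' Polynomial.derivative]
  rfl

lemma iteratedDeriv_legendreP (n m : ℕ) :
    iteratedDeriv m (legendreP n) = fun x => (legD n m).eval x := by
  rw [legendreP_eq, iteratedDeriv_poly]
  have : ∀ m, Polynomial.derivative^[m] (legD n 0) = legD n m := by
    intro m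
    induction m with
    | zero => rfl
    | succ k ih => rw [Function.iterate_succ_apply', ih, legD_derivative]
  rw [this]

lemma hasDerivAt_legD (n m : ℕ) (x : ℝ) :
    HasDerivAt (fun x => (legD n m).eval x) ((legD n (m + 1)).eval x) x := by
  rw [← legD_derivative]; exact Polynomial.hasDerivAt _ _

lemma rod_ode (n k : ℕ) :
    (Polynomial.X ^ 2 - 1) * Polynomial.derivative^[k + 2] (rodP n)
      + Polynomial.C (2 * ((k : ℝ) + 1 - n)) * Polynomial.X * Polynomial.derivative^[k + 1] (rodP n)
      + Polynomial.C (((k : ℝ) + 1) * (k - 2 * n)) * Polynomial.derivative^[k] (rodP n) = 0 := by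
  induction k with
  | zero =>
    have h1 : (Polynomial.X ^ 2 - 1) * Polynomial.derivative (rodP n)
        - Polynomial.C (2 * (n : ℝ)) * Polynomial.X * rodP n = 0 := by
      rcases n with _ | n
      · simp [rodP]
      · simp only [rodP, Polynomial.derivative_pow, Polynomial.derivative_sub,
          Polynomial.derivative_X, Polynomial.derivative_one]
        push_cast
        simp only [Polynomial.C_mul, Polynomial.C_add, Polynomial.C_1, map_ofNat, map_natCast,
          pow_succ]
        ring
    have h2 := congrArg Polynomial.derivative h1
    simp only [Polynomial.derivative_sub, Polynomial.derivative_mul, Polynomial.derivative_pow,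
      Polynomial.derivative_X, Polynomial.derivative_one, Polynomial.derivative_C,
      Polynomial.derivative_zero] at h2
    simp only [Function.iterate_succ_apply', Function.iterate_zero_apply, zero_add]
    rw [← h2]
    simp only [Polynomial.C_mul, Polynomial.C_add, Polynomial.C_sub, Polynomial.C_1, map_ofNat,
      map_natCast]
    push_cast
    simp
    ring
  | succ k ih =>
    have h2 := congrArg Polynomial.derivative ih
    simp only [Polynomial.derivative_sub, Polynomial.derivative_add, Polynomial.derivative_mul,
      Polynomial.derivative_pow,
      Polynomial.derivative_X, Polynomial.derivative_one, Polynomial.derivative_C,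
      Polynomial.derivative_zero, ← Function.iterate_succ_apply' Polynomial.derivative] at h2
    rw [← h2]
    simp only [Polynomial.C_mul, Polynomial.C_add, Polynomial.C_sub, Polynomial.C_1, map_ofNat,
      map_natCast, Nat.succ_eq_add_one]
    push_cast
    simp only [show k + 1 + 1 = k + 2 from rfl,
      show k + 1 + 2 = k + 3 from rfl]
    simp
    ring

lemma legD_ode (n m : ℕ) (x : ℝ) :
    (1 - x ^ 2) * (legD n (m + 2)).eval x - 2 * ((m : ℝ) + 1) * x * (legD n (m + 1)).eval x
      + ((n : ℝ) - m) * (n + m + 1) * (legD n m).eval x = 0 := by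
  have h := congrArg (Polynomial.eval x) (rod_ode n (n + m))
  simp only [Polynomial.eval_add, Polynomial.eval_sub, Polynomial.eval_mul, Polynomial.eval_pow,
    Polynomial.eval_X, Polynomial.eval_one, Polynomial.eval_C, Polynomial.eval_zero] at h
  push_cast at h
  simp only [legD, Polynomial.eval_mul, Polynomial.eval_C, ← add_assoc]
  linear_combination (-(1 / (2 ^ n * (n.factorial : ℝ)))) * h

lemma legD_top (n : ℕ) (x : ℝ) :
    (legD n n).eval x = ((2 * n).factorial : ℝ) / (2 ^ n * n.factorial) := by
  have hmon : (Polynomial.X ^ 2 - 1 : Polynomial ℝ).Monic := by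
    have := Polynomial.monic_X_pow_sub_C (1 : ℝ) (n := 2) (by norm_num)
    simpa using this
  have hdeg : (Polynomial.X ^ 2 - 1 : Polynomial ℝ).natDegree = 2 := by
    have := Polynomial.natDegree_X_pow_sub_C (n := 2) (r := (1 : ℝ))
    simpa using this
  have hm2 : (rodP n).Monic := hmon.pow n
  have hd2 : (rodP n).natDegree = n + n := by
    rw [rodP, hmon.natDegree_pow, hdeg]; ring
  have key : Polynomial.derivative^[n + n] (rodP n) = Polynomial.C ((2 * n).factorial : ℝ) := by
    have h0 : (Polynomial.derivative^[n + n] (rodP n)).natDegree = 0 := by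
      have := Polynomial.natDegree_iterate_derivative (rodP n) (n + n)
      omega
    rw [Polynomial.eq_C_of_natDegree_eq_zero h0, Polynomial.coeff_iterate_derivative]
    have : (rodP n).coeff (0 + (n + n)) = 1 := by
      have := hm2.coeff_natDegree
      rwa [hd2, ← zero_add (n + n)] at this
    rw [this]
    congr 1
    simp [Nat.descFactorial_self, two_mul]
  simp only [legD, key, Polynomial.eval_mul, Polynomial.eval_C]
  ring

lemma legD_one (n m : ℕ) (hm : m ≤ n) :
    (legD n m).eval 1 = ((n + m).factorial : ℝ) / (2 ^ m * m.factorial * (n - m).factorial) := by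
  induction hk : n - m generalizing m with
  | zero =>
    have : m = n := by omega
    subst this
    rw [legD_top, two_mul]; simp
  | succ k ih =>
    have h := ih (m + 1) (by omega) (by omega)
    have ho := legD_ode n m 1
    rw [h] at ho
    have e : (n : ℝ) - m = k + 1 := by
      have : n = m + (k + 1) := by omega
      rw [this]; push_cast; ring
    rw [e] at ho
    have h1 : ((n + (m + 1)).factorial : ℝ) = (n + m + 1) * (n + m).factorial := by
      rw [← add_assoc, Nat.factorial_succ]; push_cast; ring
    rw [h1] at ho
    rw [Nat.factorial_succ] at ho
    rw [Nat.factorial_succ]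
    push_cast at ho ⊢
    have a1 : (k.factorial : ℝ) ≠ 0 := by positivity
    have a2 : (m.factorial : ℝ) ≠ 0 := by positivity
    have a3 : (n : ℝ) + m + 1 ≠ 0 := by positivity
    have a4 : (k : ℝ) + 1 ≠ 0 := by positivity
    have a5 : (m : ℝ) + 1 ≠ 0 := by positivity
    have : ((k : ℝ) + 1) * (n + m + 1) * (legD n m).eval 1
       = ((k : ℝ) + 1) * (n + m + 1) * (((n + m).factorial : ℝ) / (2 ^ m * m.factorial * ((k + 1) * k.factorial))) := by
      have e2 : ((k : ℝ) + 1) * (n + m + 1) * (legD n m).eval 1 = 2 * ((m : ℝ) + 1) * 1 *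
        (((n : ℝ) + m + 1) * (n + m).factorial / (2 ^ (m + 1) * ((m + 1) * m.factorial) * k.factorial)) := by
        linear_combination ho
      rw [e2]; field_simp; ring
    exact mul_left_cancel₀ (mul_ne_zero a4 a3) this

lemma legD_one_pos (n m : ℕ) (hm : m ≤ n) : 0 < (legD n m).eval 1 := by
  rw [legD_one n m hm]; positivity

lemma legD_pos (n m : ℕ) (hm : m ≤ n) (x : ℝ) (hx : 1 ≤ x) : 0 < (legD n m).eval x := by
  induction hk : n - m generalizing m x with
  | zero =>
    have : m = n := by omega
    subst this
    rw [legD_top]; positivity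
  | succ k ih =>
    have hmono : MonotoneOn (fun x => (legD n m).eval x) (Set.Ici 1) := by
      apply monotoneOn_of_deriv_nonneg (convex_Ici 1)
      · exact (Polynomial.continuous _).continuousOn
      · exact (Polynomial.differentiable _).differentiableOn
      · intro y hy
        rw [interior_Ici] at hy
        rw [(hasDerivAt_legD n m y).deriv]
        exact (ih (m + 1) (by omega) y (le_of_lt hy) (by omega)).le
    exact lt_of_lt_of_le (legD_one_pos n m hm) (hmono (Set.self_mem_Ici) hx hx)

lemma param_fderiv {H E Y : Type*} [NormedAddCommGroup H] [NormedSpace ℝ H] [ProperSpace H]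
    [NormedAddCommGroup E] [NormedSpace ℝ E] [MetricSpace Y]
    [MeasurableSpace Y] [BorelSpace Y] (μ : Measure Y) [IsFiniteMeasureOnCompacts μ]
    (K : Set Y) (hK : IsCompact K) (U : Set H) (hU : IsOpen U) (x₀ : H) (hx₀ : x₀ ∈ U)
    (F : H → Y → E) (F' : H → Y → H →L[ℝ] E)
    (hF : ∀ x ∈ U, ContinuousOn (F x) K)
    (hF' : ContinuousOn (fun z : H × Y => F' z.1 z.2) (U ×ˢ K))
    (hd : ∀ x ∈ U, ∀ y ∈ K, HasFDerivAt (fun x => F x y) (F' x y) x) :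
    HasFDerivAt (fun x => ∫ y in K, F x y ∂μ) (∫ y in K, F' x₀ y ∂μ) x₀ := by
  obtain ⟨ε, hε, hεU⟩ := Metric.nhds_basis_closedBall.mem_iff.1 (hU.mem_nhds hx₀)
  have hc : IsCompact (Metric.closedBall x₀ ε ×ˢ K) := (isCompact_closedBall x₀ ε).prod hK
  obtain ⟨C, hC⟩ := hc.exists_bound_of_continuousOn
    (hF'.mono (Set.prod_mono hεU subset_rfl))
  have hKm : MeasurableSet K := hK.measurableSet
  refine hasFDerivAt_integral_of_dominated_of_fderiv_le (s := Metric.closedBall x₀ ε)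
    (bound := fun _ => C) (Metric.closedBall_mem_nhds x₀ hε) ?_ ?_ ?_ ?_ ?_ ?_
  · filter_upwards [hU.mem_nhds hx₀] with x hx
    exact (hF x hx).aestronglyMeasurable_of_isCompact hK hKm
  · exact (hF x₀ hx₀).integrableOn_compact hK
  · have : ContinuousOn (F' x₀) K := by
      have h := hF'.comp (f := fun y => (x₀, y)) (s := K) (by fun_prop)
        (fun y hy => ⟨hx₀, hy⟩)
      exact h
    exact this.aestronglyMeasurable_of_isCompact hK hKm
  · filter_upwards [ae_restrict_mem hKm] with y hy x hx
    exact hC (x, y) ⟨hx, hy⟩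
  · exact (continuousOn_const (c := C)).integrableOn_compact hK
  · filter_upwards [ae_restrict_mem hKm] with y hy x hx
    exact hd x (hεU hx) y hy

lemma param_deriv {E Y : Type*}
    [NormedAddCommGroup E] [NormedSpace ℝ E] [MetricSpace Y]
    [MeasurableSpace Y] [BorelSpace Y] (μ : Measure Y) [IsFiniteMeasureOnCompacts μ]
    (K : Set Y) (hK : IsCompact K) (U : Set ℝ) (hU : IsOpen U) (x₀ : ℝ) (hx₀ : x₀ ∈ U)
    (F : ℝ → Y → E) (F' : ℝ → Y → E)
    (hF : ∀ x ∈ U, ContinuousOn (F x) K)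
    (hF' : ContinuousOn (fun z : ℝ × Y => F' z.1 z.2) (U ×ˢ K))
    (hd : ∀ x ∈ U, ∀ y ∈ K, HasDerivAt (fun x => F x y) (F' x y) x) :
    HasDerivAt (fun x => ∫ y in K, F x y ∂μ) (∫ y in K, F' x₀ y ∂μ) x₀ := by
  obtain ⟨ε, hε, hεU⟩ := Metric.nhds_basis_closedBall.mem_iff.1 (hU.mem_nhds hx₀)
  have hc : IsCompact (Metric.closedBall x₀ ε ×ˢ K) := (isCompact_closedBall x₀ ε).prod hK
  obtain ⟨C, hC⟩ := hc.exists_bound_of_continuousOn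
    (hF'.mono (Set.prod_mono hεU subset_rfl))
  have hKm : MeasurableSet K := hK.measurableSet
  refine (hasDerivAt_integral_of_dominated_loc_of_deriv_le (s := Metric.closedBall x₀ ε)
    (bound := fun _ => C) (Metric.closedBall_mem_nhds x₀ hε) ?_ ?_ ?_ ?_ ?_ ?_).2
  · filter_upwards [hU.mem_nhds hx₀] with x hx
    exact (hF x hx).aestronglyMeasurable_of_isCompact hK hKm
  · exact (hF x₀ hx₀).integrableOn_compact hK
  · have : ContinuousOn (F' x₀) K := by
      have h := hF'.comp (f := fun y => (x₀, y)) (s := K) (by fun_prop)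
        (fun y hy => ⟨hx₀, hy⟩)
      exact h
    exact this.aestronglyMeasurable_of_isCompact hK hKm
  · filter_upwards [ae_restrict_mem hKm] with y hy x hx
    exact hC (x, y) ⟨hx, hy⟩
  · exact (continuousOn_const (c := C)).integrableOn_compact hK
  · filter_upwards [ae_restrict_mem hKm] with y hy x hx
    exact hd x (hεU hx) y hy

lemma param_deriv_interval (a b : ℝ) (hab : a ≤ b)
    (U : Set ℝ) (hU : IsOpen U) (x₀ : ℝ) (hx₀ : x₀ ∈ U)
    (F : ℝ → ℝ → ℝ) (F' : ℝ → ℝ → ℝ)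
    (hF : ∀ x ∈ U, ContinuousOn (F x) (Set.Icc a b))
    (hF' : ContinuousOn (fun z : ℝ × ℝ => F' z.1 z.2) (U ×ˢ Set.Icc a b))
    (hd : ∀ x ∈ U, ∀ y ∈ Set.Icc a b, HasDerivAt (fun x => F x y) (F' x y) x) :
    HasDerivAt (fun x => ∫ y in a..b, F x y) (∫ y in a..b, F' x₀ y) x₀ := by
  have := param_deriv volume (Set.Icc a b) isCompact_Icc U hU x₀ hx₀ F F' hF hF' hd
  simpa only [intervalIntegral.integral_of_le hab, integral_Icc_eq_integral_Ioc] using this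

lemma fubini_rect {E : Type*} [NormedAddCommGroup E] [NormedSpace ℝ E] [CompleteSpace E]
    (a b c d : ℝ) (hab : a ≤ b) (hcd : c ≤ d) (F : ℝ → ℝ → E)
    (hF : ContinuousOn (fun z : ℝ × ℝ => F z.1 z.2) (Set.Icc a b ×ˢ Set.Icc c d)) :
    ∫ z in Set.Icc a b ×ˢ Set.Icc c d, F z.1 z.2 = ∫ x in a..b, ∫ y in c..d, F x y := by
  have hi : IntegrableOn (fun z : ℝ × ℝ => F z.1 z.2) (Set.Icc a b ×ˢ Set.Icc c d)
      (volume.prod volume) :=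
    hF.integrableOn_compact (isCompact_Icc.prod isCompact_Icc)
  have := setIntegral_prod _ hi
  rw [← Measure.volume_eq_prod] at this
  rw [this]
  simp only [intervalIntegral.integral_of_le hab, intervalIntegral.integral_of_le hcd,
    integral_Icc_eq_integral_Ioc]

lemma fubini_swap {E : Type*} [NormedAddCommGroup E] [NormedSpace ℝ E] [CompleteSpace E]
    (a b c d : ℝ) (hab : a ≤ b) (hcd : c ≤ d) (F : ℝ → ℝ → E)
    (hF : ContinuousOn (fun z : ℝ × ℝ => F z.1 z.2) (Set.Icc a b ×ˢ Set.Icc c d)) :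
    ∫ x in a..b, ∫ y in c..d, F x y = ∫ y in c..d, ∫ x in a..b, F x y := by
  simp only [intervalIntegral.integral_of_le hab, intervalIntegral.integral_of_le hcd]
  apply integral_integral_swap
  have hi : IntegrableOn (fun z : ℝ × ℝ => F z.1 z.2) (Set.Icc a b ×ˢ Set.Icc c d)
      (volume.prod volume) :=
    hF.integrableOn_compact (isCompact_Icc.prod isCompact_Icc)
  rw [Measure.prod_restrict]
  exact hi.mono_set (Set.prod_mono Set.Ioc_subset_Icc_self Set.Ioc_subset_Icc_self)

/-- The Neumann-type integrals giving the derivatives of `legendreQ`. -/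
def qInt (n k : ℕ) (x : ℝ) : ℝ :=
  ∫ t in (-1 : ℝ)..1, (legD n 0).eval t * ((x - t) ^ (k + 1))⁻¹

lemma hasDerivAt_qInt (n k : ℕ) (x : ℝ) (hx : 1 < x) :
    HasDerivAt (qInt n k) (-((k : ℝ) + 1) * qInt n (k + 1) x) x := by
  have hne : ∀ x : ℝ, 1 < x → ∀ t ∈ Set.Icc (-1 : ℝ) 1, x - t ≠ 0 := by
    intro x hx t ht; linarith [ht.2]
  have := param_deriv_interval (-1) 1 (by norm_num) (Set.Ioi 1) isOpen_Ioi x hx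
    (fun x t => (legD n 0).eval t * ((x - t) ^ (k + 1))⁻¹)
    (fun x t => -((k : ℝ) + 1) * ((legD n 0).eval t * ((x - t) ^ (k + 1 + 1))⁻¹)) ?_ ?_ ?_
  · rw [intervalIntegral.integral_const_mul] at this
    exact this
  · intro x hx
    refine ContinuousOn.mul (Polynomial.continuous _).continuousOn (ContinuousOn.inv₀ (by fun_prop) ?_)
    intro t ht
    exact pow_ne_zero _ (hne x hx t ht)
  · refine ContinuousOn.mul continuousOn_const (ContinuousOn.mul ?_ (ContinuousOn.inv₀ (by fun_prop) ?_))
    · exact ((Polynomial.continuous _).comp continuous_snd).continuousOn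
    · rintro ⟨x, t⟩ ⟨hx, ht⟩
      exact pow_ne_zero _ (hne x hx t ht)
  · intro x hx t ht
    have h0 := hne x hx t ht
    have h1 : HasDerivAt (fun x : ℝ => (x - t) ^ (k + 1)) (((k + 1 : ℕ) : ℝ) * (x - t) ^ k * 1) x := by
      simpa using ((hasDerivAt_id x).sub_const t).fun_pow (k + 1)
    have h2 := (h1.inv (pow_ne_zero _ h0)).const_mul ((legD n 0).eval t)
    refine HasDerivAt.congr_deriv h2 ?_
    push_cast
    field_simp
    ring

lemma iteratedDeriv_legendreQ (n m : ℕ) (x : ℝ) (hx : 1 < x) :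
    iteratedDeriv m (legendreQ n) x = (1 / 2) * (-1) ^ m * m.factorial * qInt n m x := by
  induction m generalizing x with
  | zero =>
    simp [legendreQ, qInt, legendreP_eq, div_eq_mul_inv]
  | succ m ih =>
    rw [iteratedDeriv_succ]
    have he : iteratedDeriv m (legendreQ n) =ᶠ[nhds x]
        fun x => (1 / 2) * (-1) ^ m * m.factorial * qInt n m x := by
      filter_upwards [Ioi_mem_nhds hx] with y hy
      exact ih y hy
    rw [he.deriv_eq, ((hasDerivAt_qInt n m x hx).const_mul _).deriv, Nat.factorial_succ]
    push_cast
    ring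

lemma J_step (n m j : ℕ) (u : ℝ) (hu : 1 < u) :
    ((m : ℝ) + j + 1) * ∫ s in (-1 : ℝ)..1, (1 - s ^ 2) ^ (j + 1) * (legD n (j + 1)).eval s *
      ((u - s) ^ (m + (j + 1) + 1))⁻¹
    = ((n : ℝ) - j) * (n + j + 1) * ∫ s in (-1 : ℝ)..1, (1 - s ^ 2) ^ j * (legD n j).eval s *
      ((u - s) ^ (m + j + 1))⁻¹ := by
  have hne : ∀ t ∈ Set.Icc (-1 : ℝ) 1, u - t ≠ 0 := by
    intro t ht; linarith [ht.2]
  rw [← intervalIntegral.integral_const_mul, ← intervalIntegral.integral_const_mul,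
    ← sub_eq_zero, ← intervalIntegral.integral_sub]
  rotate_left
  · apply ContinuousOn.intervalIntegrable
    rw [Set.uIcc_of_le (by norm_num)]
    refine ContinuousOn.mul continuousOn_const (ContinuousOn.mul (ContinuousOn.mul (by fun_prop)
      (Polynomial.continuous _).continuousOn) (ContinuousOn.inv₀ (by fun_prop)
      (fun t ht => pow_ne_zero _ (hne t ht))))
  · apply ContinuousOn.intervalIntegrable
    rw [Set.uIcc_of_le (by norm_num)]
    refine ContinuousOn.mul continuousOn_const (ContinuousOn.mul (ContinuousOn.mul (by fun_prop)
      (Polynomial.continuous _).continuousOn) (ContinuousOn.inv₀ (by fun_prop)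
      (fun t ht => pow_ne_zero _ (hne t ht))))
  rw [intervalIntegral.integral_eq_sub_of_hasDerivAt
    (f := fun s => (1 - s ^ 2) ^ (j + 1) * (legD n (j + 1)).eval s * ((u - s) ^ (m + j + 1))⁻¹)]
  · simp
  · intro s hs
    rw [Set.uIcc_of_le (by norm_num)] at hs
    have h0 := hne s hs
    have h1 : HasDerivAt (fun s : ℝ => (u - s) ^ (m + j + 1))
        (((m + j + 1 : ℕ) : ℝ) * (u - s) ^ (m + j) * (-1)) s := by
      simpa using ((hasDerivAt_id s).const_sub u).fun_pow (m + j + 1)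
    have h2 : HasDerivAt (fun s : ℝ => (1 - s ^ 2) ^ (j + 1))
        (((j + 1 : ℕ) : ℝ) * (1 - s ^ 2) ^ j * (-(2 * s))) s := by
      have : HasDerivAt (fun s : ℝ => 1 - s ^ 2) (-(2 * s)) s := by
        simpa using ((hasDerivAt_id s).fun_pow 2).const_sub 1
      simpa using this.fun_pow (j + 1)
    have h3 := (h2.mul (hasDerivAt_legD n (j + 1) s)).mul (h1.inv (pow_ne_zero _ h0))
    refine HasDerivAt.congr_deriv h3 ?_
    simp only [Pi.inv_apply, Pi.mul_apply]
    have ho := legD_ode n j s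
    have e : (u - s) ^ (m + (j + 1) + 1) = (u - s) ^ (m + j) * (u - s) * (u - s) := by ring
    have e2 : (u - s) ^ (m + j + 1) = (u - s) ^ (m + j) * (u - s) := by ring
    rw [e, e2]
    push_cast
    field_simp
    linear_combination ((u - s) * (1 - s ^ 2) ^ j) * ho
  · apply ContinuousOn.intervalIntegrable
    rw [Set.uIcc_of_le (by norm_num)]
    refine ContinuousOn.sub (ContinuousOn.mul continuousOn_const (ContinuousOn.mul (ContinuousOn.mul (by fun_prop)
      (Polynomial.continuous _).continuousOn) (ContinuousOn.inv₀ (by fun_prop)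
      (fun t ht => pow_ne_zero _ (hne t ht))))) (ContinuousOn.mul continuousOn_const (ContinuousOn.mul (ContinuousOn.mul (by fun_prop)
      (Polynomial.continuous _).continuousOn) (ContinuousOn.inv₀ (by fun_prop)
      (fun t ht => pow_ne_zero _ (hne t ht)))))

lemma J_closed (n m : ℕ) (u : ℝ) (hu : 1 < u) (j : ℕ) (hj : j ≤ n) :
    ((m + j).factorial : ℝ) * (n - j).factorial *
      ∫ s in (-1 : ℝ)..1, (1 - s ^ 2) ^ j * (legD n j).eval s * ((u - s) ^ (m + j + 1))⁻¹
    = (m.factorial : ℝ) * (n + j).factorial * qInt n m u := by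
  induction j with
  | zero => simp [qInt]
  | succ j ih =>
    have ih := ih (by omega)
    have hs := J_step n m j u hu
    have e1 : ((m + (j + 1)).factorial : ℝ) = (m + j + 1) * (m + j).factorial := by
      rw [← add_assoc, Nat.factorial_succ]; push_cast; ring
    have e2 : ((n + (j + 1)).factorial : ℝ) = (n + j + 1) * (n + j).factorial := by
      rw [← add_assoc, Nat.factorial_succ]; push_cast; ring
    have e3 : ((n - j).factorial : ℝ) = (n - j) * (n - (j + 1)).factorial := by
      obtain ⟨k, rfl⟩ : ∃ k, n = j + 1 + k := ⟨n - (j + 1), by omega⟩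
      have a1 : j + 1 + k - j = k + 1 := by omega
      have a2 : j + 1 + k - (j + 1) = k := by omega
      rw [a1, a2, Nat.factorial_succ]; push_cast; ring
    rw [e1, e2]
    rw [e3] at ih
    linear_combination ((m + j).factorial : ℝ) * (n - (j + 1)).factorial * hs + ((n : ℝ) + j + 1) * ih

lemma ode_unique (m : ℕ) (lam : ℝ) (hl : 0 ≤ lam) (h h1 h2 : ℝ → ℝ)
    (hd : ∀ v ∈ Set.Icc (-1 : ℝ) 1, HasDerivAt h (h1 v) v)
    (hd1 : ∀ v ∈ Set.Icc (-1 : ℝ) 1, HasDerivAt h1 (h2 v) v)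
    (ho : ∀ v ∈ Set.Icc (-1 : ℝ) 1, (1 - v ^ 2) * h2 v - 2 * ((m : ℝ) + 1) * v * h1 v + lam * h v = 0)
    (hz : h 1 = 0) (v : ℝ) (hv : v ∈ Set.Ioo (-1 : ℝ) 1) : h v = 0 := by
  have hp : ∀ v : ℝ, HasDerivAt (fun s : ℝ => 1 - s ^ 2) (-(2 * v)) v := by
    intro v
    simpa using ((hasDerivAt_id v).fun_pow 2).const_sub 1
  have hE : ∀ v ∈ Set.Icc (-1 : ℝ) 1,
      HasDerivAt (fun v => (1 - v ^ 2) * (h1 v) ^ 2 + lam * (h v) ^ 2)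
        ((4 * m + 2) * v * (h1 v) ^ 2) v := by
    intro v hv
    have := ((hp v).fun_mul ((hd1 v hv).fun_pow 2)).fun_add (((hd v hv).fun_pow 2).const_mul lam)
    refine HasDerivAt.congr_deriv this ?_
    push_cast
    linear_combination (2 * h1 v) * ho v hv
  have hE2 : ∀ v ∈ Set.Icc (-1 : ℝ) 1,
      HasDerivAt (fun v => (1 - v ^ 2) ^ (2 * m + 1) * ((1 - v ^ 2) * (h1 v) ^ 2 + lam * (h v) ^ 2))
        ((4 * m + 2) * (-v) * (1 - v ^ 2) ^ (2 * m) * lam * (h v) ^ 2) v := by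
    intro v hv
    have := ((hp v).fun_pow (2 * m + 1)).fun_mul (hE v hv)
    refine HasDerivAt.congr_deriv this ?_
    push_cast
    ring
  have e0 : ∀ v ∈ Set.Icc (0 : ℝ) 1, (1 - v ^ 2) * (h1 v) ^ 2 + lam * (h v) ^ 2 ≤ 0 := by
    have hm : MonotoneOn (fun v => (1 - v ^ 2) * (h1 v) ^ 2 + lam * (h v) ^ 2) (Set.Icc 0 1) := by
      have hsub : Set.Icc (0 : ℝ) 1 ⊆ Set.Icc (-1) 1 := Set.Icc_subset_Icc (by norm_num) le_rfl
      apply monotoneOn_of_deriv_nonneg (convex_Icc 0 1)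
      · exact fun v hv => (hE v (hsub hv)).continuousAt.continuousWithinAt
      · exact fun v hv => (hE v (hsub (interior_subset hv))).differentiableAt.differentiableWithinAt
      · intro v hv
        have hv := interior_subset hv
        rw [(hE v (hsub hv)).deriv]
        have := hv.1
        positivity
    intro v hv
    have := hm hv (Set.right_mem_Icc.2 zero_le_one) hv.2
    simpa [hz] using this
  have e1 : ∀ v ∈ Set.Icc (-1 : ℝ) 0,
      (1 - v ^ 2) ^ (2 * m + 1) * ((1 - v ^ 2) * (h1 v) ^ 2 + lam * (h v) ^ 2) ≤ 0 := by
    have hm : MonotoneOn (fun v => (1 - v ^ 2) ^ (2 * m + 1) *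
        ((1 - v ^ 2) * (h1 v) ^ 2 + lam * (h v) ^ 2)) (Set.Icc (-1) 0) := by
      have hsub : Set.Icc (-1 : ℝ) 0 ⊆ Set.Icc (-1) 1 := Set.Icc_subset_Icc le_rfl (by norm_num)
      apply monotoneOn_of_deriv_nonneg (convex_Icc (-1) 0)
      · exact fun v hv => (hE2 v (hsub hv)).continuousAt.continuousWithinAt
      · exact fun v hv => (hE2 v (hsub (interior_subset hv))).differentiableAt.differentiableWithinAt
      · intro v hv
        have hv := interior_subset hv
        rw [(hE2 v (hsub hv)).deriv]
        have h3 : 0 ≤ -v := by linarith [hv.2]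
        have h4 : 0 ≤ 1 - v ^ 2 := by nlinarith [hv.1, hv.2]
        positivity
    intro v hv
    have := hm hv (Set.right_mem_Icc.2 (by norm_num)) hv.2
    have h5 := e0 0 (by norm_num)
    simp at this h5 ⊢
    linarith
  have k : ∀ v ∈ Set.Ioo (-1 : ℝ) 1, h1 v = 0 := by
    intro v hv
    have hpos : 0 < 1 - v ^ 2 := by nlinarith [hv.1, hv.2]
    have hle : (1 - v ^ 2) * (h1 v) ^ 2 + lam * (h v) ^ 2 ≤ 0 := by
      rcases le_total 0 v with h0 | h0
      · exact e0 v ⟨h0, hv.2.le⟩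
      · have := e1 v ⟨hv.1.le, h0⟩
        by_contra hc
        have := mul_pos (pow_pos hpos (2 * m + 1)) (not_le.1 hc)
        linarith
    have h6 : 0 ≤ lam * (h v) ^ 2 := by positivity
    have h7 : (1 - v ^ 2) * (h1 v) ^ 2 ≤ 0 := by linarith
    have h8 : (h1 v) ^ 2 ≤ 0 := by
      by_contra hc
      have := mul_pos hpos (not_le.1 hc)
      linarith
    exact pow_eq_zero_iff (two_ne_zero) |>.1 (le_antisymm h8 (sq_nonneg _))
  have := constant_of_has_deriv_right_zero (f := h) (a := v) (b := 1)
    (fun x hx => (hd x ⟨by linarith [hv.1, hx.1], hx.2⟩).continuousAt.continuousWithinAt)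
    (fun x hx => by
      have := hd x ⟨by linarith [hv.1, hx.1], hx.2.le⟩
      rw [k x ⟨by linarith [hv.1, hx.1], hx.2⟩] at this
      exact this.hasDerivWithinAt)
  rw [← this 1 ⟨hv.2.le, le_rfl⟩, hz]

/-- Squared distance from the focal segment, scaled. -/
def zq (u v s : ℝ) : ℝ := u ^ 2 + v ^ 2 + s ^ 2 - 1 - 2 * u * v * s

lemma zq_pos (u v s : ℝ) (hu : 1 < u) (hv : v ∈ Set.Ioo (-u) u) (hs : s ∈ Set.Icc (-1 : ℝ) 1) :
    0 < zq u v s := by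
  have e : zq u v s = (v - u * s) ^ 2 + (u ^ 2 - 1) * (1 - s ^ 2) := by unfold zq; ring
  rw [e]
  have hu2 : 0 < u ^ 2 - 1 := by nlinarith
  rcases eq_or_lt_of_le hs.1 with h | h
  · subst h
    have : 0 < (v - u * -1) ^ 2 := by
      apply pow_pos; linarith [hv.1]
    nlinarith
  rcases eq_or_lt_of_le hs.2 with h' | h'
  · subst h'
    have : 0 < (u * 1 - v) ^ 2 := by
      apply pow_pos; linarith [hv.2]
    nlinarith
  · have : 0 < 1 - s ^ 2 := by nlinarith
    positivity

lemma zq_cont : Continuous (fun z : ℝ × ℝ × ℝ => zq z.1 z.2.1 z.2.2) := by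
  unfold zq; fun_prop

lemma hasDerivAt_zq_v (u v s : ℝ) : HasDerivAt (fun v => zq u v s) (2 * v - 2 * u * s) v := by
  unfold zq
  have := ((((hasDerivAt_id v).fun_pow 2).const_add (u ^ 2)).add_const (s ^ 2 - 1)).fun_sub
    (((hasDerivAt_id v).const_mul (2 * u)).mul_const s)
  refine (HasDerivAt.congr_deriv this ?_).congr_of_eventuallyEq (Filter.Eventually.of_forall ?_)
  · simp
  · intro v; simp; ring

lemma hasDerivAt_zq_s (u v s : ℝ) : HasDerivAt (fun s => zq u v s) (2 * s - 2 * u * v) s := by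
  have := hasDerivAt_zq_v u s v
  refine (HasDerivAt.congr_deriv this ?_).congr_of_eventuallyEq (Filter.Eventually.of_forall ?_)
  · ring
  · intro v; simp [zq]; ring

lemma axis_step (n m : ℕ) (hm : m ≤ n) (u v : ℝ) (hu : 1 < u) (hv : v ∈ Set.Ioo (-1 : ℝ) 1) :
    (legD n m).eval 1 * ∫ s in (-1 : ℝ)..1, (1 - s ^ 2) ^ m * (legD n m).eval s *
        (zq u v s) ^ (-(m : ℝ) - 1 / 2)
    = (legD n m).eval v * ∫ s in (-1 : ℝ)..1, (1 - s ^ 2) ^ m * (legD n m).eval s *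
        ((u - s) ^ (m + m + 1))⁻¹ := by
  set r : ℝ := -(m : ℝ) - 1 / 2 with hr
  set w : ℝ → ℝ := fun s => (1 - s ^ 2) ^ m * (legD n m).eval s with hw
  have hwc : Continuous w := by
    have := (legD n m).continuous
    rw [hw]; fun_prop
  set U : Set ℝ := Set.Ioo (-u) u with hU
  have hUo : IsOpen U := isOpen_Ioo
  set g : ℝ → ℝ := fun v => ∫ s in (-1 : ℝ)..1, w s * (zq u v s) ^ r with hg
  set g1 : ℝ → ℝ := fun v => ∫ s in (-1 : ℝ)..1, w s * ((2 * v - 2 * u * s) * r * (zq u v s) ^ (r - 1)) with hg1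
  set g2 : ℝ → ℝ := fun v => ∫ s in (-1 : ℝ)..1, w s * (2 * r * (zq u v s) ^ (r - 1)
      + (2 * v - 2 * u * s) ^ 2 * r * (r - 1) * (zq u v s) ^ (r - 1 - 1)) with hg2
  have hzc : ∀ q : ℝ, ContinuousOn (fun z : ℝ × ℝ => (zq u z.1 z.2) ^ q) (U ×ˢ Set.Icc (-1 : ℝ) 1) := by
    intro q
    refine ContinuousOn.rpow_const (zq_cont.comp (by fun_prop : Continuous (fun z : ℝ × ℝ => (u, z.1, z.2)))).continuousOn ?_
    rintro ⟨v, s⟩ ⟨h1, h2⟩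
    exact Or.inl (zq_pos u v s hu h1 h2).ne'
  have hzc' : ∀ q : ℝ, ∀ v ∈ U, ContinuousOn (fun s : ℝ => (zq u v s) ^ q) (Set.Icc (-1 : ℝ) 1) := by
    intro q v hv
    exact (hzc q).comp (f := fun s => (v, s)) (by fun_prop) (fun s hs => ⟨hv, hs⟩)
  have hD : ∀ v ∈ U, HasDerivAt g (g1 v) v := by
    intro v hv
    refine param_deriv_interval (-1) 1 (by norm_num) U hUo v hv
      (fun v s => w s * (zq u v s) ^ r)
      (fun v s => w s * ((2 * v - 2 * u * s) * r * (zq u v s) ^ (r - 1))) ?_ ?_ ?_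
    · intro x hx
      exact hwc.continuousOn.mul (hzc' r x hx)
    · refine ContinuousOn.mul (by fun_prop) (ContinuousOn.mul (by fun_prop) (hzc _))
    · intro x hx s hs
      exact ((hasDerivAt_zq_v u x s).rpow_const (Or.inl (zq_pos u x s hu hx hs).ne')).const_mul _
  have hD1 : ∀ v ∈ U, HasDerivAt g1 (g2 v) v := by
    intro v hv
    refine param_deriv_interval (-1) 1 (by norm_num) U hUo v hv
      (fun v s => w s * ((2 * v - 2 * u * s) * r * (zq u v s) ^ (r - 1)))
      (fun v s => w s * (2 * r * (zq u v s) ^ (r - 1)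
      + (2 * v - 2 * u * s) ^ 2 * r * (r - 1) * (zq u v s) ^ (r - 1 - 1))) ?_ ?_ ?_
    · intro x hx
      exact hwc.continuousOn.mul (ContinuousOn.mul (by fun_prop) (hzc' _ x hx))
    · refine ContinuousOn.mul (by fun_prop) (ContinuousOn.add (ContinuousOn.mul (by fun_prop) (hzc _))
        (ContinuousOn.mul (by fun_prop) (hzc _)))
    · intro x hx s hs
      have h1 := ((hasDerivAt_zq_v u x s).rpow_const (p := r - 1) (Or.inl (zq_pos u x s hu hx hs).ne'))
      have h2 : HasDerivAt (fun x : ℝ => (2 * x - 2 * u * s) * r) (2 * r) x := by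
        simpa using ((((hasDerivAt_id x).const_mul 2).sub_const (2 * u * s)).mul_const r)
      refine HasDerivAt.congr_deriv ((h2.fun_mul h1).const_mul (w s)) ?_
      ring
  have hsub : Set.Icc (-1 : ℝ) 1 ⊆ U := fun x hx => ⟨by linarith [hx.1], by linarith [hx.2]⟩
  have hode : ∀ v ∈ Set.Icc (-1 : ℝ) 1, (1 - v ^ 2) * g2 v - 2 * ((m : ℝ) + 1) * v * g1 v
      + (((n : ℝ) - m) * (n + m + 1)) * g v = 0 := by
    intro v hv
    have hv := hsub hv
    have i0 : IntervalIntegrable (fun s => w s * (zq u v s) ^ r) volume (-1) 1 := by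
      apply ContinuousOn.intervalIntegrable
      rw [Set.uIcc_of_le (by norm_num)]
      exact hwc.continuousOn.mul (hzc' r v hv)
    have i1 : IntervalIntegrable (fun s => w s * ((2 * v - 2 * u * s) * r * (zq u v s) ^ (r - 1))) volume (-1) 1 := by
      apply ContinuousOn.intervalIntegrable
      rw [Set.uIcc_of_le (by norm_num)]
      exact hwc.continuousOn.mul (ContinuousOn.mul (by fun_prop) (hzc' _ v hv))
    have i2 : IntervalIntegrable (fun s => w s * (2 * r * (zq u v s) ^ (r - 1)
      + (2 * v - 2 * u * s) ^ 2 * r * (r - 1) * (zq u v s) ^ (r - 1 - 1))) volume (-1) 1 := by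
      apply ContinuousOn.intervalIntegrable
      rw [Set.uIcc_of_le (by norm_num)]
      exact hwc.continuousOn.mul (ContinuousOn.add (ContinuousOn.mul (by fun_prop) (hzc' _ v hv))
        (ContinuousOn.mul (by fun_prop) (hzc' _ v hv)))
    simp only [hg, hg1, hg2]
    rw [← intervalIntegral.integral_const_mul, ← intervalIntegral.integral_const_mul,
      ← intervalIntegral.integral_const_mul, ← intervalIntegral.integral_sub (i2.const_mul _) (i1.const_mul _),
      ← intervalIntegral.integral_add ((i2.const_mul _).sub (i1.const_mul _)) (i0.const_mul _)]
    rw [intervalIntegral.integral_eq_sub_of_hasDerivAt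
      (f := fun s => (1 - s ^ 2) ^ (m + 1) * ((legD n m).eval s * ((2 * s - 2 * u * v) * r * (zq u v s) ^ (r - 1))
         - (legD n (m + 1)).eval s * (zq u v s) ^ r))]
    · simp
    · intro s hs
      rw [Set.uIcc_of_le (by norm_num)] at hs
      have hz0 := zq_pos u v s hu hv hs
      have hzs := hasDerivAt_zq_s u v s
      have hr0 := hzs.rpow_const (p := r) (Or.inl hz0.ne')
      have hr1 := hzs.rpow_const (p := r - 1) (Or.inl hz0.ne')
      have h2 : HasDerivAt (fun x : ℝ => (2 * x - 2 * u * v) * r) (2 * r) s := by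
        simpa using ((((hasDerivAt_id s).const_mul 2).sub_const (2 * u * v)).mul_const r)
      have hp : HasDerivAt (fun s : ℝ => (1 - s ^ 2) ^ (m + 1)) (((m + 1 : ℕ) : ℝ) * (1 - s ^ 2) ^ m * (-(2 * s))) s := by
        have : HasDerivAt (fun s : ℝ => 1 - s ^ 2) (-(2 * s)) s := by
          simpa using ((hasDerivAt_id s).fun_pow 2).const_sub 1
        simpa using this.fun_pow (m + 1)
      have := hp.fun_mul (((hasDerivAt_legD n m s).fun_mul (h2.fun_mul hr1)).fun_sub
        ((hasDerivAt_legD n (m + 1) s).fun_mul hr0))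
      refine HasDerivAt.congr_deriv this ?_
      have ho := legD_ode n m s
      have e1 : (zq u v s) ^ (r - 1) = zq u v s * (zq u v s) ^ (r - 1 - 1) := by
        rw [rpow_sub_one hz0.ne' (r - 1)]; field_simp
      have e0 : (zq u v s) ^ r = zq u v s * (zq u v s * (zq u v s) ^ (r - 1 - 1)) := by
        rw [← e1, rpow_sub_one hz0.ne' r]; field_simp
      rw [e0, e1]
      simp only [hw]
      push_cast
      set R := (zq u v s) ^ (r - 1 - 1)
      rw [hr]
      have hz : zq u v s = u ^ 2 + v ^ 2 + s ^ 2 - 1 - 2 * u * v * s := rfl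
      rw [hz]
      set Z := u ^ 2 + v ^ 2 + s ^ 2 - 1 - 2 * u * v * s with hZ
      linear_combination (exp := 1) (-(1 - s ^ 2) ^ m * Z ^ 2 * R) * ho
    · exact ((i2.const_mul _).sub (i1.const_mul _)).add (i0.const_mul _)
  have hp1 := legD_one_pos n m hm
  set c := g 1 / (legD n m).eval 1 with hc
  have hcz : g 1 - c * (legD n m).eval 1 = 0 := by rw [hc]; field_simp; ring
  have huniq := ode_unique m (((n : ℝ) - m) * (n + m + 1)) (by
      have : (m : ℝ) ≤ n := by exact_mod_cast hm
      have : 0 ≤ (n : ℝ) - m := by linarith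
      positivity)
    (fun v => g v - c * (legD n m).eval v) (fun v => g1 v - c * (legD n (m + 1)).eval v)
    (fun v => g2 v - c * (legD n (m + 2)).eval v)
    (fun v hv => (hD v (hsub hv)).fun_sub ((hasDerivAt_legD n m v).const_mul c))
    (fun v hv => (hD1 v (hsub hv)).fun_sub ((hasDerivAt_legD n (m + 1) v).const_mul c))
    (fun v hv => by
      have h1 := hode v hv
      have h2 := legD_ode n m v
      linear_combination h1 - c * h2) hcz v hv
  have hg1e : g 1 = ∫ s in (-1 : ℝ)..1, (1 - s ^ 2) ^ m * (legD n m).eval s * ((u - s) ^ (m + m + 1))⁻¹ := by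
    simp only [hg]
    apply intervalIntegral.integral_congr
    intro s hs
    rw [Set.uIcc_of_le (by norm_num)] at hs
    simp only [hw]
    congr 1
    have hus : 0 < u - s := by linarith [hs.2]
    have : zq u 1 s = (u - s) ^ (2 : ℝ) := by rw [rpow_two]; unfold zq; ring
    rw [this, ← rpow_mul hus.le, ← rpow_natCast, ← rpow_neg hus.le]
    congr 1
    rw [hr]; push_cast; ring
  have : g v = c * (legD n m).eval v := by linarith
  rw [← hg1e]
  change _ * g v = _
  rw [this, hc]
  field_simp

/-- Scaled squared distance in prolate coordinates `w = cosh η`, `s = cos θ`. -/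
def xk (A B η θ t : ℝ) : ℝ :=
  A ^ 2 + B ^ 2 + (sinh η * sin θ) ^ 2 + (cosh η * cos θ) ^ 2 - 2 * B * (cosh η * cos θ)
    - 2 * A * (sinh η * sin θ) * cos t

lemma xk_cont (A B : ℝ) : Continuous (fun z : ℝ × ℝ × ℝ => xk A B z.1 z.2.1 z.2.2) := by
  unfold xk; fun_prop

lemma hasDerivAt_xk_eta (A B η θ t : ℝ) : HasDerivAt (fun η => xk A B η θ t)
    (2 * sinh η * cosh η * (sin θ ^ 2 + cos θ ^ 2) - 2 * B * sinh η * cos θ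
      - 2 * A * cosh η * sin θ * cos t) η := by
  unfold xk
  have h1 := (hasDerivAt_sinh η).mul_const (sin θ)
  have h2 := (hasDerivAt_cosh η).mul_const (cos θ)
  have := ((((h1.fun_pow 2).const_add (A ^ 2 + B ^ 2)).fun_add (h2.fun_pow 2)).fun_sub
    (h2.const_mul (2 * B))).fun_sub ((h1.const_mul (2 * A)).mul_const (cos t))
  refine HasDerivAt.congr_deriv this ?_
  push_cast; ring

lemma hasDerivAt_xk_eta2 (A B η θ t : ℝ) : HasDerivAt (fun η =>
    (2 * sinh η * cosh η * (sin θ ^ 2 + cos θ ^ 2) - 2 * B * sinh η * cos θ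
      - 2 * A * cosh η * sin θ * cos t))
    (2 * (sinh η ^ 2 + cosh η ^ 2) * (sin θ ^ 2 + cos θ ^ 2) - 2 * B * cosh η * cos θ
      - 2 * A * sinh η * sin θ * cos t) η := by
  have h1 := hasDerivAt_sinh η
  have h2 := hasDerivAt_cosh η
  have := ((((h1.const_mul 2).fun_mul h2).mul_const (sin θ ^ 2 + cos θ ^ 2)).fun_sub
    ((h1.const_mul (2 * B)).mul_const (cos θ))).fun_sub
    (((h2.const_mul (2 * A)).mul_const (sin θ)).mul_const (cos t))
  refine HasDerivAt.congr_deriv this ?_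
  ring

lemma hasDerivAt_xk_theta (A B η θ t : ℝ) : HasDerivAt (fun θ => xk A B η θ t)
    (2 * (sinh η ^ 2 - cosh η ^ 2) * sin θ * cos θ + 2 * B * cosh η * sin θ
      - 2 * A * sinh η * cos θ * cos t) θ := by
  unfold xk
  have h1 := (hasDerivAt_sin θ).const_mul (sinh η)
  have h2 := (hasDerivAt_cos θ).const_mul (cosh η)
  have := ((((h1.fun_pow 2).const_add (A ^ 2 + B ^ 2)).fun_add (h2.fun_pow 2)).fun_sub
    (h2.const_mul (2 * B))).fun_sub ((h1.const_mul (2 * A)).mul_const (cos t))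
  refine HasDerivAt.congr_deriv this ?_
  push_cast; ring

lemma hasDerivAt_xk_theta2 (A B η θ t : ℝ) : HasDerivAt (fun θ =>
    (2 * (sinh η ^ 2 - cosh η ^ 2) * sin θ * cos θ + 2 * B * cosh η * sin θ
      - 2 * A * sinh η * cos θ * cos t))
    (2 * (sinh η ^ 2 - cosh η ^ 2) * (cos θ ^ 2 - sin θ ^ 2) + 2 * B * cosh η * cos θ
      + 2 * A * sinh η * sin θ * cos t) θ := by
  have h1 := hasDerivAt_sin θ
  have h2 := hasDerivAt_cos θ
  have := (((h1.const_mul (2 * (sinh η ^ 2 - cosh η ^ 2))).fun_mul h2).fun_add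
    (h1.const_mul (2 * B * cosh η))).fun_sub ((h2.const_mul (2 * A * sinh η)).mul_const (cos t))
  refine HasDerivAt.congr_deriv this ?_
  ring

lemma hasDerivAt_xk_t (A B η θ t : ℝ) : HasDerivAt (fun t => xk A B η θ t)
    (2 * A * sinh η * sin θ * sin t) t := by
  unfold xk
  have := ((hasDerivAt_cos t).const_mul (2 * A * (sinh η * sin θ))).const_sub
    (A ^ 2 + B ^ 2 + (sinh η * sin θ) ^ 2 + (cosh η * cos θ) ^ 2 - 2 * B * (cosh η * cos θ))
  refine HasDerivAt.congr_deriv this ?_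
  ring

lemma rect_zero_fst (F F' : ℝ → ℝ → ℝ) (hd : ∀ θ t, HasDerivAt (fun θ => F θ t) (F' θ t) θ)
    (hc : Continuous (fun z : ℝ × ℝ => F' z.1 z.2)) (h0 : ∀ t, F 0 t = 0) (h1 : ∀ t, F π t = 0) :
    ∫ z in Set.Icc (0 : ℝ) π ×ˢ Set.Icc (0 : ℝ) (2 * π), F' z.1 z.2 = 0 := by
  rw [fubini_rect 0 π 0 (2 * π) pi_pos.le (by positivity) F' hc.continuousOn,
    fubini_swap 0 π 0 (2 * π) pi_pos.le (by positivity) F' hc.continuousOn]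
  have : ∀ t, ∫ θ in (0 : ℝ)..π, F' θ t = 0 := by
    intro t
    rw [intervalIntegral.integral_eq_sub_of_hasDerivAt (f := fun θ => F θ t) (fun θ _ => hd θ t)]
    · simp [h0, h1]
    · apply Continuous.intervalIntegrable
      exact hc.comp (by fun_prop : Continuous (fun θ : ℝ => (θ, t)))
  simp [this]

lemma rect_zero_snd (F F' : ℝ → ℝ → ℝ) (hd : ∀ θ t, HasDerivAt (fun t => F θ t) (F' θ t) t)
    (hc : Continuous (fun z : ℝ × ℝ => F' z.1 z.2)) (h0 : ∀ θ, F θ 0 = 0)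
    (h1 : ∀ θ, F θ (2 * π) = 0) :
    ∫ z in Set.Icc (0 : ℝ) π ×ˢ Set.Icc (0 : ℝ) (2 * π), F' z.1 z.2 = 0 := by
  rw [fubini_rect 0 π 0 (2 * π) pi_pos.le (by positivity) F' hc.continuousOn]
  have : ∀ θ, ∫ t in (0 : ℝ)..(2 * π), F' θ t = 0 := by
    intro θ
    rw [intervalIntegral.integral_eq_sub_of_hasDerivAt (f := fun t => F θ t) (fun t _ => hd θ t)]
    · simp [h0, h1]
    · apply Continuous.intervalIntegrable
      exact hc.comp (by fun_prop : Continuous (fun t : ℝ => (θ, t)))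
  simp [this]

/-- The pointwise identity behind the separated equation. -/
lemma pde_alg (m : ℕ) (A B sh ch sn cs st ct p p1 p2 lam R X : ℝ) (hch : ch ^ 2 = 1 + sh ^ 2)
    (hsn : sn ^ 2 + cs ^ 2 = 1) (hst : st ^ 2 + ct ^ 2 = 1)
    (ho : (1 - cs ^ 2) * p2 - 2 * ((m : ℝ) + 1) * cs * p1 + lam * p = 0)
    (hX : X = A ^ 2 + B ^ 2 + (sh * sn) ^ 2 + (ch * cs) ^ 2 - 2 * B * (ch * cs)
      - 2 * A * (sh * sn) * ct) (r : ℝ) (hr : r = -(m : ℝ) - 1 / 2)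
    (Xe Xee Xt Xtt : ℝ)
    (hXe : Xe = 2 * sh * ch * (sn ^ 2 + cs ^ 2) - 2 * B * sh * cs - 2 * A * ch * sn * ct)
    (hXee : Xee = 2 * (sh ^ 2 + ch ^ 2) * (sn ^ 2 + cs ^ 2) - 2 * B * ch * cs
      - 2 * A * sh * sn * ct)
    (hXt : Xt = 2 * (sh ^ 2 - ch ^ 2) * sn * cs + 2 * B * ch * sn - 2 * A * sh * cs * ct)
    (hXtt : Xtt = 2 * (sh ^ 2 - ch ^ 2) * (cs ^ 2 - sn ^ 2) + 2 * B * ch * cs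
      + 2 * A * sh * sn * ct) :
    sn * p * (sh * (Xee * r * (X * R) + Xe ^ 2 * r * (r - 1) * R)
        + (2 * m + 1) * ch * (Xe * r * (X * R)) - lam * sh * (X * (X * R)))
    = -(sh * (((2 * m + 1) * cs) * (p * (Xt * r * (X * R)) + sn * p1 * (X * (X * R)))
        + sn * (-sn * p1 * (Xt * r * (X * R)) + p * (Xtt * r * (X * R) + Xt ^ 2 * r * (r - 1) * R)
          + (cs * p1 - sn ^ 2 * p2) * (X * (X * R)) + sn * p1 * (Xt * r * (X * R)))))
      - p * (2 * A * r * (sh ^ 2 + sn ^ 2)) *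
        ((2 * m + 1) * ct * (X * R) + st * ((2 * A * sh * sn * st) * (r - 1) * R)) := by
  have hh : ch ^ 2 * sn ^ 2 + sh ^ 2 * cs ^ 2 = sh ^ 2 + sn ^ 2 := by
    linear_combination sn ^ 2 * hch + sh ^ 2 * hsn
  have ea : Xe = (2 * (sh * sn) - 2 * A * ct) * (ch * sn) + (2 * (ch * cs) - 2 * B) * (sh * cs) := by
    rw [hXe]; ring
  have eb : Xt = (2 * (sh * sn) - 2 * A * ct) * (sh * cs) - (2 * (ch * cs) - 2 * B) * (ch * sn) := by
    rw [hXt]; ring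
  have ec : (2 * (sh * sn) - 2 * A * ct) ^ 2 + (2 * (ch * cs) - 2 * B) ^ 2
      = 4 * X - 4 * A ^ 2 * st ^ 2 := by
    rw [hX]; linear_combination 4 * A ^ 2 * hst
  have e1 : Xe ^ 2 + Xt ^ 2 = (sh ^ 2 + sn ^ 2) * (4 * X - 4 * A ^ 2 * st ^ 2) := by
    rw [ea, eb, ← ec, ← hh]; ring
  have e2 : Xee + Xtt = 4 * (sh ^ 2 + sn ^ 2) := by
    rw [hXee, hXtt, hch]; linear_combination (4 * sh ^ 2) * hsn
  have e3 : ch * sn * Xe + sh * cs * Xt = (sh ^ 2 + sn ^ 2) * (2 * (sh * sn) - 2 * A * ct) := by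
    rw [ea, eb, ← hh]; ring
  clear hXe hXee hXt hXtt ea eb ec hX
  have hs2 : 1 - cs ^ 2 = sn ^ 2 := by linarith
  rw [hs2] at ho
  generalize sh ^ 2 + sn ^ 2 = h at *
  subst hr
  linear_combination (p * sn * sh * (-(m:ℝ) - 1 / 2) * (-(m:ℝ) - 1 / 2 - 1) * R) * e1
    + (p * (-(m:ℝ) - 1 / 2) * X * R * sn * sh) * e2
    + (p * (-(m:ℝ) - 1 / 2) * X * R * (2 * m + 1)) * e3 - (X ^ 2 * R * sn * sh) * ho

def xkE (A B η θ t : ℝ) : ℝ := 2 * sinh η * cosh η * (sin θ ^ 2 + cos θ ^ 2)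
    - 2 * B * sinh η * cos θ - 2 * A * cosh η * sin θ * cos t
def xkEE (A B η θ t : ℝ) : ℝ := 2 * (sinh η ^ 2 + cosh η ^ 2) * (sin θ ^ 2 + cos θ ^ 2)
    - 2 * B * cosh η * cos θ - 2 * A * sinh η * sin θ * cos t
def xkT (A B η θ t : ℝ) : ℝ := 2 * (sinh η ^ 2 - cosh η ^ 2) * sin θ * cos θ
    + 2 * B * cosh η * sin θ - 2 * A * sinh η * cos θ * cos t
def xkTT (A B η θ t : ℝ) : ℝ := 2 * (sinh η ^ 2 - cosh η ^ 2) * (cos θ ^ 2 - sin θ ^ 2)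
    + 2 * B * cosh η * cos θ + 2 * A * sinh η * sin θ * cos t
def wgt (n m : ℕ) (z : ℝ × ℝ) : ℝ :=
  sin z.1 ^ (2 * m + 1) * sin z.2 ^ (2 * m) * (legD n m).eval (cos z.1)

lemma wgt_cont (n m : ℕ) : Continuous (wgt n m) := by
  have : Continuous (fun x => (legD n m).eval x) := (legD n m).continuous
  unfold wgt; fun_prop

set_option maxHeartbeats 1000000 in
lemma eta_step (n m : ℕ) (A B η₁ : ℝ)
    (hpos : ∀ η ∈ Set.Ioo (-η₁) η₁, ∀ θ t, 0 < xk A B η θ t) (η : ℝ) (hη0 : 0 < η)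
    (hη : η < η₁) (hm : m ≤ n) :
    (legD n m).eval 1 * ∫ z in Set.Icc (0 : ℝ) π ×ˢ Set.Icc (0 : ℝ) (2 * π),
      wgt n m z *
        xk A B η z.1 z.2 ^ (-(m : ℝ) - 1 / 2)
    = (legD n m).eval (cosh η) * ∫ z in Set.Icc (0 : ℝ) π ×ˢ Set.Icc (0 : ℝ) (2 * π),
      wgt n m z *
        xk A B 0 z.1 z.2 ^ (-(m : ℝ) - 1 / 2) := by
  set r : ℝ := -(m : ℝ) - 1 / 2 with hr
  set K : Set (ℝ × ℝ) := Set.Icc (0 : ℝ) π ×ˢ Set.Icc (0 : ℝ) (2 * π) with hK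
  have hKc : IsCompact K := isCompact_Icc.prod isCompact_Icc
  have hpc : ∀ k, Continuous (fun x => (legD n k).eval x) := fun k => (legD n k).continuous
  have hwc := wgt_cont n m
  set U : Set ℝ := Set.Ioo (-η₁) η₁ with hU
  have hUo : IsOpen U := isOpen_Ioo
  have cXe : Continuous (fun z : ℝ × ℝ × ℝ => xkE A B z.1 z.2.1 z.2.2) := by simp only [xkE]; fun_prop
  have cXee : Continuous (fun z : ℝ × ℝ × ℝ => xkEE A B z.1 z.2.1 z.2.2) := by simp only [xkEE]; fun_prop
  have cXt : Continuous (fun z : ℝ × ℝ × ℝ => xkT A B z.1 z.2.1 z.2.2) := by simp only [xkT]; fun_prop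
  have cXtt : Continuous (fun z : ℝ × ℝ × ℝ => xkTT A B z.1 z.2.1 z.2.2) := by simp only [xkTT]; fun_prop
  have sl : ∀ η : ℝ, Continuous (fun z : ℝ × ℝ => (η, z.1, z.2)) := fun η => by fun_prop
  set g : ℝ → ℝ := fun η => ∫ z in K, wgt n m z * xk A B η z.1 z.2 ^ r with hg
  set g1 : ℝ → ℝ := fun η => ∫ z in K, wgt n m z * (xkE A B η z.1 z.2 * r * xk A B η z.1 z.2 ^ (r - 1)) with hg1
  set g2 : ℝ → ℝ := fun η => ∫ z in K, wgt n m z * (xkEE A B η z.1 z.2 * r * xk A B η z.1 z.2 ^ (r - 1)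
    + xkE A B η z.1 z.2 ^ 2 * r * (r - 1) * xk A B η z.1 z.2 ^ (r - 1 - 1)) with hg2
  have hzc : ∀ q : ℝ, ContinuousOn (fun z : ℝ × ℝ × ℝ => xk A B z.1 z.2.1 z.2.2 ^ q) (U ×ˢ K) := by
    intro q
    refine ContinuousOn.rpow_const (xk_cont A B).continuousOn ?_
    rintro ⟨v, s⟩ ⟨h1, h2⟩
    exact Or.inl (hpos v h1 s.1 s.2).ne'
  have hzc' : ∀ q : ℝ, ∀ η ∈ U, Continuous (fun z : ℝ × ℝ => xk A B η z.1 z.2 ^ q) := by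
    intro q η hη
    have hcc : Continuous (fun z : ℝ × ℝ => xk A B η z.1 z.2) := by unfold xk; fun_prop
    refine Continuous.rpow_const hcc ?_
    intro z
    exact Or.inl (hpos η hη z.1 z.2).ne'
  have hD : ∀ η ∈ U, HasDerivAt g (g1 η) η := by
    intro η hη
    refine param_deriv volume K hKc U hUo η hη
      (fun η z => wgt n m z * xk A B η z.1 z.2 ^ r)
      (fun η z => wgt n m z * (xkE A B η z.1 z.2 * r * xk A B η z.1 z.2 ^ (r - 1))) ?_ ?_ ?_
    · intro x hx
      exact (hwc.mul (hzc' r x hx)).continuousOn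
    · refine ContinuousOn.mul (by fun_prop) (ContinuousOn.mul (by fun_prop) (hzc _))
    · intro x hx s hs
      exact ((hasDerivAt_xk_eta A B x s.1 s.2).rpow_const (Or.inl (hpos x hx s.1 s.2).ne')).const_mul _
  have hD1 : ∀ η ∈ U, HasDerivAt g1 (g2 η) η := by
    intro η hη
    refine param_deriv volume K hKc U hUo η hη
      (fun η z => wgt n m z * (xkE A B η z.1 z.2 * r * xk A B η z.1 z.2 ^ (r - 1)))
      (fun η z => wgt n m z * (xkEE A B η z.1 z.2 * r * xk A B η z.1 z.2 ^ (r - 1)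
        + xkE A B η z.1 z.2 ^ 2 * r * (r - 1) * xk A B η z.1 z.2 ^ (r - 1 - 1))) ?_ ?_ ?_
    · intro x hx
      have : Continuous (fun z : ℝ × ℝ => xkE A B x z.1 z.2) := by unfold xkE; fun_prop
      exact (hwc.mul ((this.mul continuous_const).mul (hzc' _ x hx))).continuousOn
    · refine ContinuousOn.mul (by fun_prop) (ContinuousOn.add (ContinuousOn.mul (by fun_prop) (hzc _))
        (ContinuousOn.mul (by fun_prop) (hzc _)))
    · intro x hx s hs
      have h1 := ((hasDerivAt_xk_eta A B x s.1 s.2).rpow_const (p := r - 1) (Or.inl (hpos x hx s.1 s.2).ne'))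
      have h2 := (hasDerivAt_xk_eta2 A B x s.1 s.2).mul_const r
      refine HasDerivAt.congr_deriv ((h2.fun_mul h1).const_mul (wgt n m s)) ?_
      simp only [xkE, xkEE]
      ring
  set lam : ℝ := ((n : ℝ) - m) * (n + m + 1) with hlam
  have hode : ∀ η ∈ U, sinh η * g2 η + (2 * m + 1) * cosh η * g1 η - lam * sinh η * g η = 0 := by
    intro η hη
    have c0 := hzc' r η hη
    have c1 := hzc' (r - 1) η hη
    have c2 := hzc' (r - 1 - 1) η hη
    have cXe' : Continuous (fun z : ℝ × ℝ => xkE A B η z.1 z.2) := by unfold xkE; fun_prop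
    have cXee' : Continuous (fun z : ℝ × ℝ => xkEE A B η z.1 z.2) := by unfold xkEE; fun_prop
    have cXt' : Continuous (fun z : ℝ × ℝ => xkT A B η z.1 z.2) := by unfold xkT; fun_prop
    have cXtt' : Continuous (fun z : ℝ × ℝ => xkTT A B η z.1 z.2) := by unfold xkTT; fun_prop
    have i0 : IntegrableOn (fun z : ℝ × ℝ => wgt n m z * xk A B η z.1 z.2 ^ r) K :=
      (hwc.mul c0).continuousOn.integrableOn_compact hKc
    have i1 : IntegrableOn (fun z : ℝ × ℝ => wgt n m z * (xkE A B η z.1 z.2 * r * xk A B η z.1 z.2 ^ (r - 1))) K :=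
      (hwc.mul ((cXe'.mul continuous_const).mul c1)).continuousOn.integrableOn_compact hKc
    have i2 : IntegrableOn (fun z : ℝ × ℝ => wgt n m z * (xkEE A B η z.1 z.2 * r * xk A B η z.1 z.2 ^ (r - 1)
        + xkE A B η z.1 z.2 ^ 2 * r * (r - 1) * xk A B η z.1 z.2 ^ (r - 1 - 1))) K := by
      refine ContinuousOn.integrableOn_compact hKc (Continuous.continuousOn ?_)
      fun_prop
    have cp := hpc m
    have cp1 := hpc (m + 1)
    have cp2 := hpc (m + 2)
    set D1 : ℝ → ℝ → ℝ := fun θ t => sinh η * sin t ^ (2 * m) * (sin θ ^ (2 * m) *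
      (((2 * m + 1) * cos θ) * ((legD n m).eval (cos θ) * (xkT A B η θ t * r * xk A B η θ t ^ (r - 1))
          + sin θ * (legD n (m + 1)).eval (cos θ) * xk A B η θ t ^ r)
        + sin θ * (-sin θ * (legD n (m + 1)).eval (cos θ) * (xkT A B η θ t * r * xk A B η θ t ^ (r - 1))
          + (legD n m).eval (cos θ) * (xkTT A B η θ t * r * xk A B η θ t ^ (r - 1)
            + xkT A B η θ t ^ 2 * r * (r - 1) * xk A B η θ t ^ (r - 1 - 1))
          + (cos θ * (legD n (m + 1)).eval (cos θ) - sin θ ^ 2 * (legD n (m + 2)).eval (cos θ))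
              * xk A B η θ t ^ r
          + sin θ * (legD n (m + 1)).eval (cos θ) * (xkT A B η θ t * r * xk A B η θ t ^ (r - 1)))))
      with hD1'
    set D2 : ℝ → ℝ → ℝ := fun θ t => (legD n m).eval (cos θ) * (2 * A * r * (sinh η ^ 2 + sin θ ^ 2))
      * sin θ ^ (2 * m) * (sin t ^ (2 * m) * ((2 * m + 1) * cos t * xk A B η θ t ^ (r - 1)
        + sin t * ((2 * A * sinh η * sin θ * sin t) * (r - 1) * xk A B η θ t ^ (r - 1 - 1)))) with hD2'
    have cD1 : Continuous (fun z : ℝ × ℝ => D1 z.1 z.2) := by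
      simp only [hD1']; fun_prop
    have cD2 : Continuous (fun z : ℝ × ℝ => D2 z.1 z.2) := by
      simp only [hD2']; fun_prop
    have hcos : ∀ k θ, HasDerivAt (fun θ => (legD n k).eval (cos θ))
        ((legD n (k + 1)).eval (cos θ) * (-sin θ)) θ := fun k θ =>
      (hasDerivAt_legD n k (cos θ)).comp θ (hasDerivAt_cos θ)
    have z1 : ∫ z in K, D1 z.1 z.2 = 0 := by
      refine rect_zero_fst (fun θ t => sinh η * sin t ^ (2 * m) * (sin θ ^ (2 * m + 1) *
        ((legD n m).eval (cos θ) * (xkT A B η θ t * r * xk A B η θ t ^ (r - 1))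
          + sin θ * (legD n (m + 1)).eval (cos θ) * xk A B η θ t ^ r))) D1 ?_ cD1 ?_ ?_
      · intro θ t
        have hx := hasDerivAt_xk_theta A B η θ t
        have hx2 := hasDerivAt_xk_theta2 A B η θ t
        have hX0 := (hpos η hη θ t).ne'
        have := (((hasDerivAt_sin θ).fun_pow (2 * m + 1)).fun_mul
          (((hcos m θ).fun_mul ((hx2.mul_const r).fun_mul (hx.rpow_const (p := r - 1) (Or.inl hX0)))).fun_add
          (((hasDerivAt_sin θ).fun_mul (hcos (m + 1) θ)).fun_mul
            (hx.rpow_const (p := r) (Or.inl hX0))))).const_mul (sinh η * sin t ^ (2 * m))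
        refine HasDerivAt.congr_deriv this ?_
        simp only [hD1', xkT, xkTT]
        push_cast
        ring
      · intro t; simp
      · intro t; simp
    have z2 : ∫ z in K, D2 z.1 z.2 = 0 := by
      refine rect_zero_snd (fun θ t => (legD n m).eval (cos θ) * (2 * A * r * (sinh η ^ 2 + sin θ ^ 2))
      * sin θ ^ (2 * m) * (sin t ^ (2 * m + 1) * xk A B η θ t ^ (r - 1))) D2 ?_ cD2 ?_ ?_
      · intro θ t
        have hx := hasDerivAt_xk_t A B η θ t
        have hX0 := (hpos η hη θ t).ne'
        have := (((hasDerivAt_sin t).fun_pow (2 * m + 1)).fun_mul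
          (hx.rpow_const (p := r - 1) (Or.inl hX0))).const_mul ((legD n m).eval (cos θ) *
            (2 * A * r * (sinh η ^ 2 + sin θ ^ 2)) * sin θ ^ (2 * m))
        refine HasDerivAt.congr_deriv this ?_
        simp only [hD2']
        push_cast
        ring
      · intro t; simp
      · intro t; simp
    have j1 : IntegrableOn (fun z : ℝ × ℝ => D1 z.1 z.2) K := cD1.continuousOn.integrableOn_compact hKc
    have j2 : IntegrableOn (fun z : ℝ × ℝ => D2 z.1 z.2) K := cD2.continuousOn.integrableOn_compact hKc
    have key : ∀ z : ℝ × ℝ, sinh η * (wgt n m z * (xkEE A B η z.1 z.2 * r * xk A B η z.1 z.2 ^ (r - 1)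
        + xkE A B η z.1 z.2 ^ 2 * r * (r - 1) * xk A B η z.1 z.2 ^ (r - 1 - 1)))
        + (2 * m + 1) * cosh η * (wgt n m z * (xkE A B η z.1 z.2 * r * xk A B η z.1 z.2 ^ (r - 1)))
        - lam * sinh η * (wgt n m z * xk A B η z.1 z.2 ^ r) = -D1 z.1 z.2 - D2 z.1 z.2 := by
      rintro ⟨θ, t⟩
      have hX0 := (hpos η hη θ t).ne'
      have e1 : xk A B η θ t ^ (r - 1) = xk A B η θ t * xk A B η θ t ^ (r - 1 - 1) := by
        rw [rpow_sub_one hX0 (r - 1)]; field_simp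
      have e0 : xk A B η θ t ^ r = xk A B η θ t * (xk A B η θ t * xk A B η θ t ^ (r - 1 - 1)) := by
        rw [← e1, rpow_sub_one hX0 r]; field_simp
      have pa := pde_alg m A B (sinh η) (cosh η) (sin θ) (cos θ) (sin t) (cos t)
        ((legD n m).eval (cos θ)) ((legD n (m + 1)).eval (cos θ)) ((legD n (m + 2)).eval (cos θ)) lam
        (xk A B η θ t ^ (r - 1 - 1)) (xk A B η θ t) (by rw [cosh_sq]; ring) (sin_sq_add_cos_sq θ)
        (sin_sq_add_cos_sq t) (legD_ode n m (cos θ)) rfl r hr (xkE A B η θ t) (xkEE A B η θ t) (xkT A B η θ t)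
        (xkTT A B η θ t) rfl rfl rfl rfl
      simp only [hD1', hD2', wgt]
      rw [e0, e1]
      linear_combination (sin θ ^ (2 * m) * sin t ^ (2 * m)) * pa
    simp only [hg, hg1, hg2]
    rw [← integral_const_mul, ← integral_const_mul, ← integral_const_mul,
      ← integral_add (i2.const_mul _) (i1.const_mul _),
      ← integral_sub ((i2.const_mul _).fun_add (i1.const_mul _)) (i0.const_mul _)]
    simp only [key]
    rw [integral_sub j1.fun_neg j2, integral_neg, z1, z2]
    simp
  set q : ℝ → ℝ := fun η => (legD n m).eval (cosh η) with hq
  set q1 : ℝ → ℝ := fun η => (legD n (m + 1)).eval (cosh η) * sinh η with hq1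
  have hdq : ∀ η, HasDerivAt q (q1 η) η := fun η =>
    (hasDerivAt_legD n m (cosh η)).comp η (hasDerivAt_cosh η)
  have hdq1 : ∀ η, HasDerivAt q1 ((legD n (m + 2)).eval (cosh η) * sinh η * sinh η
      + (legD n (m + 1)).eval (cosh η) * cosh η) η := fun η =>
    ((hasDerivAt_legD n (m + 1) (cosh η)).comp η (hasDerivAt_cosh η)).fun_mul (hasDerivAt_sinh η)
  have hqpos : ∀ η, 0 < q η := fun η => legD_pos n m hm _ (one_le_cosh η)
  have hW : ∀ x ∈ U, HasDerivAt (fun η => sinh η ^ (2 * m + 1) * (g1 η * q η - g η * q1 η)) 0 x := by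
    intro x hx
    have := ((hasDerivAt_sinh x).fun_pow (2 * m + 1)).fun_mul
      (((hD1 x hx).fun_mul (hdq x)).fun_sub ((hD x hx).fun_mul (hdq1 x)))
    refine HasDerivAt.congr_deriv this ?_
    have h1 := hode x hx
    have h2 := legD_ode n m (cosh x)
    have h3 := cosh_sq x
    push_cast
    simp only [hq, hq1]
    rw [h3] at h2
    linear_combination (sinh x ^ (2 * m) * (legD n m).eval (cosh x)) * h1
      + (sinh x ^ (2 * m + 1) * g x) * h2
  have hsub : Set.Icc 0 η ⊆ U := fun x hx => ⟨by linarith [hx.1], by linarith [hx.2]⟩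
  have hW0 : ∀ x ∈ Set.Ioc 0 η, g1 x * q x - g x * q1 x = 0 := by
    intro x hx
    have := constant_of_has_deriv_right_zero (f := fun η => sinh η ^ (2 * m + 1) * (g1 η * q η - g η * q1 η))
      (a := 0) (b := η) (fun x hx => (hW x (hsub hx)).continuousAt.continuousWithinAt)
      (fun x hx => (hW x (hsub ⟨hx.1, hx.2.le⟩)).hasDerivWithinAt) x ⟨hx.1.le, hx.2⟩
    simp only [sinh_zero] at this
    have hs : sinh x ≠ 0 := (sinh_pos_iff.2 hx.1).ne'
    rw [zero_pow (by omega), zero_mul] at this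
    exact (mul_eq_zero.1 this).resolve_left (pow_ne_zero _ hs)
  have hquot : ∀ x ∈ U, HasDerivAt (fun x => g x / q x) ((g1 x * q x - g x * q1 x) / q x ^ 2) x :=
    fun x hx => (hD x hx).fun_div (hdq x) (hqpos x).ne'
  obtain ⟨c, hc, hce⟩ := exists_hasDerivAt_eq_slope (fun x => g x / q x) _ hη0
    (fun x hx => (hquot x (hsub hx)).continuousAt.continuousWithinAt)
    (fun x hx => hquot x (hsub ⟨hx.1.le, hx.2.le⟩))
  rw [hW0 c ⟨hc.1, hc.2.le⟩, zero_div] at hce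
  have h4 : g η / q η = g 0 / q 0 := by
    have h5 : η - 0 ≠ 0 := by linarith
    have := (div_eq_zero_iff.1 hce.symm).resolve_right h5
    linarith
  have q0 : q 0 = (legD n m).eval 1 := by simp [hq]
  rw [div_eq_div_iff (hqpos η).ne' (hqpos 0).ne', q0] at h4
  change _ * g η = q η * g 0
  linarith

lemma cos_subst (f : ℝ → ℝ) (hf : ContinuousOn f (Set.Icc (-1) 1)) :
    ∫ θ in (0 : ℝ)..π, f (cos θ) * sin θ = ∫ s in (-1 : ℝ)..1, f s := by
  have := intervalIntegral.integral_comp_mul_deriv'' (a := 0) (b := π) (f := cos) (f' := fun x => -sin x)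
    (g := f) (by fun_prop) (fun x _ => (hasDerivAt_cos x).hasDerivWithinAt) (by fun_prop)
    (hf.mono (by rintro _ ⟨x, _, rfl⟩; exact ⟨neg_one_le_cos x, cos_le_one x⟩))
  simp only [cos_zero, cos_pi, Function.comp, mul_neg, intervalIntegral.integral_neg] at this
  rw [intervalIntegral.integral_symm (-1 : ℝ) 1] at this
  linarith

lemma kappa (m : ℕ) : (4 ^ m * (m.factorial : ℝ) ^ 2) * ∫ t in (0 : ℝ)..(2 * π), sin t ^ (2 * m)
    = 2 * π * (2 * m).factorial := by
  induction m with
  | zero => simp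
  | succ m ih =>
    have : 2 * (m + 1) = 2 * m + 2 := by ring
    rw [this, integral_sin_pow]
    simp only [sin_zero, sin_two_pi, ne_eq, Nat.add_eq_zero_iff, one_ne_zero, and_false, not_false_eq_true, zero_pow, zero_mul, sub_zero, zero_div, zero_add]
    rw [Nat.factorial_succ, Nat.factorial_succ, Nat.factorial_succ]
    push_cast
    have h : (2 * (m : ℝ) + 2) ≠ 0 := by positivity
    field_simp
    linear_combination (4 * (m : ℝ) + 4) * ih

lemma xk_pos (u v η θ t : ℝ) (hu : 1 < u) (hv : v ∈ Set.Ioo (-1 : ℝ) 1) (hη : cosh η < u) :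
    0 < xk (√(u ^ 2 - 1) * √(1 - v ^ 2)) (u * v) η θ t := by
  have hA : (√(u ^ 2 - 1) * √(1 - v ^ 2)) ^ 2 = (u ^ 2 - 1) * (1 - v ^ 2) := by
    rw [mul_pow, sq_sqrt (by nlinarith), sq_sqrt (by nlinarith [hv.1, hv.2])]
  generalize √(u ^ 2 - 1) * √(1 - v ^ 2) = A at *
  have e : xk A (u * v) η θ t = (A - sinh η * sin θ * cos t) ^ 2 + (sinh η * sin θ * sin t) ^ 2
      + (u * v - cosh η * cos θ) ^ 2 := by
    unfold xk
    linear_combination (-(sinh η * sin θ) ^ 2) * sin_sq_add_cos_sq t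
  rw [e]
  by_contra hc
  have h1 : A - sinh η * sin θ * cos t = 0 := by
    refine pow_eq_zero_iff (two_ne_zero) |>.1 ?_; nlinarith [sq_nonneg (A - sinh η * sin θ * cos t), sq_nonneg (sinh η * sin θ * sin t), sq_nonneg (u * v - cosh η * cos θ)]
  have h2 : sinh η * sin θ * sin t = 0 := by
    refine pow_eq_zero_iff (two_ne_zero) |>.1 ?_; nlinarith [sq_nonneg (A - sinh η * sin θ * cos t), sq_nonneg (sinh η * sin θ * sin t), sq_nonneg (u * v - cosh η * cos θ)]
  have h3 : u * v - cosh η * cos θ = 0 := by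
    refine pow_eq_zero_iff (two_ne_zero) |>.1 ?_; nlinarith [sq_nonneg (A - sinh η * sin θ * cos t), sq_nonneg (sinh η * sin θ * sin t), sq_nonneg (u * v - cosh η * cos θ)]
  have h4 : A ^ 2 = (sinh η * sin θ) ^ 2 := by
    have : A = sinh η * sin θ * cos t := by linarith
    have h5 : (sinh η * sin θ) ^ 2 = (sinh η * sin θ * cos t) ^ 2 + (sinh η * sin θ * sin t) ^ 2 := by
      linear_combination (-(sinh η * sin θ) ^ 2) * sin_sq_add_cos_sq t
    rw [h5, h2, this]; ring
  have h6 : (u * v) ^ 2 = (cosh η * cos θ) ^ 2 := by rw [sub_eq_zero.1 h3]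
  have hch := cosh_sq η
  have hc1 := one_le_cosh η
  have h7 : (u ^ 2 - cosh η ^ 2) * (u ^ 2 - cos θ ^ 2) = 0 := by
    rw [hA] at h4
    have e1 := sin_sq_add_cos_sq θ
    have e2 : sin θ ^ 2 = 1 - cos θ ^ 2 := by linarith
    rw [mul_pow, e2] at h4
    have e3 : sinh η ^ 2 = cosh η ^ 2 - 1 := by linarith
    rw [e3] at h4
    linear_combination (u ^ 2) * h4 + (u ^ 2 - 1) * h6
  have h8 : 0 < u ^ 2 - cosh η ^ 2 := by nlinarith
  have h9 : 0 < u ^ 2 - cos θ ^ 2 := by nlinarith [cos_sq_le_one θ]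
  nlinarith [mul_pos h8 h9]

lemma xk_zero (u v θ t : ℝ) (hu : 1 < u) (hv : v ∈ Set.Ioo (-1 : ℝ) 1) :
    xk (√(u ^ 2 - 1) * √(1 - v ^ 2)) (u * v) 0 θ t = zq u v (cos θ) := by
  have hA : (√(u ^ 2 - 1) * √(1 - v ^ 2)) ^ 2 = (u ^ 2 - 1) * (1 - v ^ 2) := by
    rw [mul_pow, sq_sqrt (by nlinarith), sq_sqrt (by nlinarith [hv.1, hv.2])]
  unfold xk zq
  rw [hA]; simp; ring

lemma sep_formula (n m : ℕ) (hm : m ≤ n) (u v η : ℝ) (hu : 1 < u) (hv : v ∈ Set.Ioo (-1 : ℝ) 1)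
    (hη0 : 0 < η) (hη : cosh η < u) :
    ∫ z in Set.Icc (0 : ℝ) π ×ˢ Set.Icc (0 : ℝ) (2 * π),
      wgt n m z * xk (√(u ^ 2 - 1) * √(1 - v ^ 2)) (u * v) η z.1 z.2 ^ (-(m : ℝ) - 1 / 2)
    = 4 * π * (-1) ^ m * ((n - m).factorial / (n + m).factorial) * (legD n m).eval (cosh η) *
      iteratedDeriv m (legendreQ n) u * (legD n m).eval v := by
  set η₁ := arcosh u with hη₁
  have hc1 : cosh η₁ = u := cosh_arcosh hu.le
  have hη₁0 : 0 ≤ η₁ := arcosh_nonneg hu.le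
  have hlt : ∀ x, |x| < η₁ → cosh x < u := by
    intro x hx
    rw [← hc1]; rw [cosh_lt_cosh, abs_of_nonneg hη₁0]; exact hx
  have hη1 : η < η₁ := by
    rw [← hc1, cosh_lt_cosh, abs_of_nonneg hη₁0, abs_of_pos hη0] at hη; exact hη
  have e1 := eta_step n m (√(u ^ 2 - 1) * √(1 - v ^ 2)) (u * v) η₁
    (fun x hx θ t => xk_pos u v x θ t hu hv (hlt x (abs_lt.2 hx))) η hη0 hη1 hm
  simp only [xk_zero u v _ _ hu hv] at e1
  set r : ℝ := -(m : ℝ) - 1 / 2 with hr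
  have cz : ContinuousOn (fun s => zq u v s ^ r) (Set.Icc (-1) 1) := by
    refine ContinuousOn.rpow_const (by unfold zq; fun_prop) ?_
    intro s hs
    exact Or.inl (zq_pos u v s hu ⟨by linarith [hv.1], by linarith [hv.2]⟩ hs).ne'
  have cz' : Continuous (fun θ => zq u v (cos θ) ^ r) :=
    cz.comp_continuous continuous_cos (fun θ => ⟨neg_one_le_cos θ, cos_le_one θ⟩)
  have cw := wgt_cont n m
  have e2 : ∫ z in Set.Icc (0 : ℝ) π ×ˢ Set.Icc (0 : ℝ) (2 * π), wgt n m z * zq u v (cos z.1) ^ r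
      = (∫ t in (0 : ℝ)..(2 * π), sin t ^ (2 * m)) * ∫ s in (-1 : ℝ)..1, (1 - s ^ 2) ^ m *
        (legD n m).eval s * zq u v s ^ r := by
    rw [fubini_rect 0 π 0 (2 * π) pi_pos.le (by positivity) (fun θ t => wgt n m (θ, t) * zq u v (cos θ) ^ r)
      (Continuous.continuousOn (cw.mul (cz'.comp continuous_fst)))]
    rw [← cos_subst (fun s => (1 - s ^ 2) ^ m * (legD n m).eval s * zq u v s ^ r)
      (ContinuousOn.mul (Continuous.continuousOn (by
        have : Continuous (fun x => (legD n m).eval x) := (legD n m).continuous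
        fun_prop)) cz), ← intervalIntegral.integral_const_mul]
    congr 1
    funext θ
    rw [intervalIntegral.integral_mul_const]
    simp only [wgt]
    have : ∀ t, sin θ ^ (2 * m + 1) * sin t ^ (2 * m) * (legD n m).eval (cos θ)
      = (sin θ ^ (2 * m + 1) * (legD n m).eval (cos θ)) * sin t ^ (2 * m) := fun t => by ring
    simp only [this]
    rw [intervalIntegral.integral_const_mul, ← sin_sq, ← pow_mul]
    ring
  rw [e2] at e1
  have e3 := axis_step n m hm u v hu hv
  rw [← hr] at e3
  have e4 := J_closed n m u hu m hm
  have e5 := iteratedDeriv_legendreQ n m u hu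
  have e6 := kappa m
  have e7 := legD_one n m hm
  have e8 := legD_one_pos n m hm
  rw [e5]
  generalize (∫ z in Set.Icc (0 : ℝ) π ×ˢ Set.Icc (0 : ℝ) (2 * π), wgt n m z * xk (√(u ^ 2 - 1) * √(1 - v ^ 2)) (u * v) η z.1 z.2 ^ r) = I at *
  generalize (∫ t in (0 : ℝ)..(2 * π), sin t ^ (2 * m)) = k at *
  generalize (∫ s in (-1 : ℝ)..1, (1 - s ^ 2) ^ m * (legD n m).eval s * zq u v s ^ r) = G at *
  generalize (∫ s in (-1 : ℝ)..1, (1 - s ^ 2) ^ m * (legD n m).eval s * ((u - s) ^ (m + m + 1))⁻¹) = J at *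
  generalize (legD n m).eval 1 = p at *
  generalize (legD n m).eval v = pv at *
  generalize (legD n m).eval (cosh η) = pw at *
  rw [← two_mul] at e4
  have f1 : (0 : ℝ) < (n - m).factorial := by positivity
  have f2 : (0 : ℝ) < (n + m).factorial := by positivity
  have f3 : (0 : ℝ) < m.factorial := by positivity
  have f4 : (0 : ℝ) < (2 * m).factorial := by positivity
  generalize ((n - m).factorial : ℝ) = a at *
  generalize ((n + m).factorial : ℝ) = b at *
  generalize (m.factorial : ℝ) = c at *
  generalize ((2 * m).factorial : ℝ) = d at *
  have hsq : ((-1 : ℝ) ^ m) * (-1) ^ m = 1 := by rw [← pow_add, ← two_mul, pow_mul]; simp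
  have h4 : (4 : ℝ) ^ m = 2 ^ m * 2 ^ m := by rw [← mul_pow]; norm_num
  have t1 : I = pw * (k * G) / p := by field_simp; linarith
  have t2 : G = pv * J / p := by field_simp; linarith
  have t3 : J = c * b * qInt n m u / (d * a) := by field_simp; linarith
  have t4 : k = 2 * π * d / (4 ^ m * c ^ 2) := by field_simp; linarith
  rw [t1, t2, t3, t4, e7, h4]
  have : 4 * π * (-1) ^ m * (a / b) * pw * (1 / 2 * (-1) ^ m * c * qInt n m u) * pv
    = 4 * π * (a / b) * pw * (1 / 2 * c * qInt n m u) * pv := by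
    linear_combination (4 * π * (a / b) * pw * (1 / 2 * c * qInt n m u) * pv) * hsq
  rw [this]
  field_simp
  ring

def cI (α β : ℝ) (m : ℕ) (q : ℝ) : ℝ := ∫ t in (0 : ℝ)..(2 * π), cos (m * t) * (α - 2 * β * cos t) ^ q
def dI (α β : ℝ) (m : ℕ) (q : ℝ) : ℝ := ∫ t in (0 : ℝ)..(2 * π), sin t ^ (2 * m) * (α - 2 * β * cos t) ^ q
def ffP (m : ℕ) (q : ℝ) : ℝ := ∏ i ∈ Finset.range m, (q - i)
def ddP (m : ℕ) : ℝ := ∏ i ∈ Finset.range m, (2 * (i : ℝ) + 1)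

lemma per_zero (F F' : ℝ → ℝ) (hd : ∀ t, HasDerivAt F (F' t) t) (hc : Continuous F')
    (h : F 0 = F (2 * π)) : ∫ t in (0 : ℝ)..(2 * π), F' t = 0 := by
  rw [intervalIntegral.integral_eq_sub_of_hasDerivAt (fun t _ => hd t) (hc.intervalIntegrable _ _), h, sub_self]

lemma xq_cont (α β : ℝ) (hX : ∀ t, 0 < α - 2 * β * cos t) (q : ℝ) : Continuous (fun t => (α - 2 * β * cos t) ^ q) :=
  Continuous.rpow_const (by fun_prop) (fun t => Or.inl (hX t).ne')

lemma xq_deriv (α β : ℝ) (hX : ∀ t, 0 < α - 2 * β * cos t) (q t : ℝ) : HasDerivAt (fun t => (α - 2 * β * cos t) ^ q)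
    (2 * β * sin t * q * (α - 2 * β * cos t) ^ (q - 1)) t := by
  have h : HasDerivAt (fun t => α - 2 * β * cos t) (2 * β * sin t) t := by
    refine HasDerivAt.congr_deriv (((hasDerivAt_cos t).const_mul (2 * β)).const_sub α) ?_
    ring
  exact h.rpow_const (Or.inl (hX t).ne')

lemma cI_rec (α β : ℝ) (hX : ∀ t, 0 < α - 2 * β * cos t) (m : ℕ) (q : ℝ) : ((m : ℝ) + 1) * cI α β (m + 1) (q + 1)
    + β * (q + 1) * (cI α β m q - cI α β (m + 2) q) = 0 := by
  have c0 := xq_cont α β hX q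
  have c1 := xq_cont α β hX (q + 1)
  unfold cI
  rw [← intervalIntegral.integral_sub (Continuous.intervalIntegrable (by fun_prop) _ _)
    (Continuous.intervalIntegrable (by fun_prop) _ _), ← intervalIntegral.integral_const_mul,
    ← intervalIntegral.integral_const_mul,
    ← intervalIntegral.integral_add (Continuous.intervalIntegrable (by fun_prop) _ _)
    (Continuous.intervalIntegrable (by fun_prop) _ _)]
  refine per_zero (fun t => sin (((m : ℝ) + 1) * t) * (α - 2 * β * cos t) ^ (q + 1)) _ ?_ (by fun_prop) ?_
  · intro t
    have h1 : HasDerivAt (fun t => sin (((m : ℝ) + 1) * t)) (cos (((m : ℝ) + 1) * t) * (((m : ℝ) + 1))) t := by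
      simpa using (((hasDerivAt_id t).const_mul ((m : ℝ) + 1)).sin)
    refine HasDerivAt.congr_deriv (h1.fun_mul (xq_deriv α β hX (q + 1) t)) ?_
    have h2 : cos ((m : ℝ) * t) - cos (((m + 2 : ℕ) : ℝ) * t) = 2 * sin (((m : ℝ) + 1) * t) * sin t := by
      have e1 : (m : ℝ) * t = ((m : ℝ) + 1) * t - t := by ring
      have e2 : ((m + 2 : ℕ) : ℝ) * t = ((m : ℝ) + 1) * t + t := by push_cast; ring
      rw [e1, e2, cos_sub, cos_add]; ring
    rw [← sub_mul, h2]
    simp only [add_sub_cancel_right]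
    push_cast
    ring
  · have : sin (((m : ℝ) + 1) * (2 * π)) = 0 := by
      have := sin_nat_mul_pi ((m + 1) * 2)
      push_cast at this
      rw [← this]; ring_nf
    simp [this]

lemma cI_one (α β : ℝ) (hX : ∀ t, 0 < α - 2 * β * cos t) (q : ℝ) : cI α β 1 q = -2 * β * q * dI α β 1 (q - 1) := by
  have c0 := xq_cont α β hX q
  have c1 := xq_cont α β hX (q - 1)
  rw [← sub_eq_zero]
  unfold cI dI
  rw [← intervalIntegral.integral_const_mul,
    ← intervalIntegral.integral_sub (Continuous.intervalIntegrable (by fun_prop) _ _)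
    (Continuous.intervalIntegrable (by fun_prop) _ _)]
  refine per_zero (fun t => sin t * (α - 2 * β * cos t) ^ q) _ ?_ (by fun_prop) ?_
  · intro t
    refine HasDerivAt.congr_deriv ((hasDerivAt_sin t).fun_mul (xq_deriv α β hX q t)) ?_
    push_cast
    rw [one_mul]
    ring
  · simp

lemma dI_rec (α β : ℝ) (hX : ∀ t, 0 < α - 2 * β * cos t) (m : ℕ) (s : ℝ) : 4 * β ^ 2 * (s * (s - 1)) * dI α β (m + 2) (s - 2)
    - (2 * m + 3) * ((2 * m + 1) * dI α β m s - (2 * m + 2) * dI α β (m + 1) s) = 0 := by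
  have c0 := xq_cont α β hX s
  have c1 := xq_cont α β hX (s - 1)
  have c2 := xq_cont α β hX (s - 2)
  unfold dI
  rw [← intervalIntegral.integral_const_mul, ← intervalIntegral.integral_const_mul,
    ← intervalIntegral.integral_const_mul,
    ← intervalIntegral.integral_sub (Continuous.intervalIntegrable (by fun_prop) _ _)
    (Continuous.intervalIntegrable (by fun_prop) _ _), ← intervalIntegral.integral_const_mul,
    ← intervalIntegral.integral_sub (Continuous.intervalIntegrable (by fun_prop) _ _)
    (Continuous.intervalIntegrable (by fun_prop) _ _)]
  refine per_zero (fun t => 2 * β * s * (sin t ^ (2 * m + 3) * (α - 2 * β * cos t) ^ (s - 1))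
    - (2 * m + 3) * (sin t ^ (2 * m + 1) * cos t * (α - 2 * β * cos t) ^ s)) _ ?_ (by fun_prop) ?_
  · intro t
    have hs := hasDerivAt_sin t
    have := (((hs.fun_pow (2 * m + 3)).fun_mul (xq_deriv α β hX (s - 1) t)).const_mul (2 * β * s)).fun_sub
      ((((hs.fun_pow (2 * m + 1)).fun_mul (hasDerivAt_cos t)).fun_mul (xq_deriv α β hX s t)).const_mul
        (2 * (m : ℝ) + 3))
    refine HasDerivAt.congr_deriv this ?_
    have e : s - 1 - 1 = s - 2 := by ring
    have h2 : cos t ^ 2 = 1 - sin t ^ 2 := cos_sq' t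
    rw [e]
    push_cast
    linear_combination (-(2 * (m : ℝ) + 3) * (2 * m + 1) * sin t ^ (2 * m) * (α - 2 * β * cos t) ^ s) * h2
  · simp

lemma jacobi_gen (α β : ℝ) (hX : ∀ t, 0 < α - 2 * β * cos t) (hβ : β ≠ 0) (m : ℕ) : ∀ k : ℕ, ddP m * cI α β m ((k : ℝ) - 1 / 2)
    = (-2 * β) ^ m * ffP m ((k : ℝ) - 1 / 2) * dI α β m ((k : ℝ) - 1 / 2 - m) := by
  induction m using Nat.twoStepInduction with
  | zero => intro k; simp [ddP, ffP, cI, dI]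
  | one =>
    intro k
    have := cI_one α β hX ((k : ℝ) - 1 / 2)
    simp only [ddP, ffP, Finset.range_one, Finset.prod_singleton, Nat.cast_zero, Nat.cast_one, this]
    ring
  | more m ih0 ih1 =>
    intro k
    have h0 := ih0 k
    have h1 := ih1 (k + 1)
    have ec : ((k + 1 : ℕ) : ℝ) - 1 / 2 = ((k : ℝ) - 1 / 2) + 1 := by push_cast; ring
    rw [ec] at h1
    have hq : (k : ℝ) - 1 / 2 + 1 ≠ 0 := by
      have : (0 : ℝ) ≤ k := by positivity
      linarith
    set q : ℝ := (k : ℝ) - 1 / 2 with hqd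
    have hc := cI_rec α β hX m q
    have hd := dI_rec α β hX m (q - m)
    have d1 : ddP (m + 1) = ddP m * (2 * m + 1) := by simp [ddP, Finset.prod_range_succ]
    have d2 : ddP (m + 2) = ddP m * (2 * m + 1) * (2 * m + 3) := by
      simp only [ddP, Finset.prod_range_succ]; push_cast; ring
    have f1 : ffP (m + 1) (q + 1) = (q + 1) * ffP m q := by
      unfold ffP
      rw [Finset.prod_range_succ']
      simp [mul_comm]
    have f2 : ffP (m + 2) q = ffP m q * ((q - m) * (q - m - 1)) := by
      simp only [ffP, Finset.prod_range_succ]; push_cast; ring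
    have a1 : q + 1 - ((m + 1 : ℕ) : ℝ) = q - m := by push_cast; ring
    have a2 : q - ((m + 2 : ℕ) : ℝ) = q - m - 2 := by push_cast; ring
    rw [d1, f1, a1] at h1
    rw [d2, f2, a2]
    have hne : β * (q + 1) ≠ 0 := mul_ne_zero hβ hq
    apply mul_left_cancel₀ hne
    rw [pow_add]
    rw [pow_add] at h1
    linear_combination (-ddP m * (2 * m + 1) * (2 * m + 3)) * hc
      + ((2 * (m : ℝ) + 1) * (2 * m + 3) * β * (q + 1)) * h0
      + ((2 * (m : ℝ) + 3) * (m + 1)) * h1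
      - ((-2 * β) ^ m * ffP m q * β * (q + 1)) * hd

lemma jacobi (α β : ℝ) (hX : ∀ t, 0 < α - 2 * β * cos t) (m : ℕ) : cI α β m (-1 / 2) = β ^ m * dI α β m (-(m : ℝ) - 1 / 2) := by
  by_cases hβ : β = 0
  · subst hβ
    rcases Nat.eq_zero_or_pos m with rfl | hm
    · simp [cI, dI]; norm_num
    · rw [zero_pow hm.ne', zero_mul]
      simp only [cI, mul_zero, zero_mul, sub_zero]
      rw [intervalIntegral.integral_mul_const]
      have hm' : (m : ℝ) ≠ 0 := by positivity
      have := per_zero (fun t => sin (m * t) / m) (fun t => cos (m * t)) (fun t => by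
        have h1 : HasDerivAt (fun t => sin ((m : ℝ) * t)) (cos ((m : ℝ) * t) * m) t := by
          simpa using (((hasDerivAt_id t).const_mul (m : ℝ)).sin)
        refine HasDerivAt.congr_deriv (h1.div_const (m : ℝ)) ?_
        field_simp) (by fun_prop) (by
          have := sin_nat_mul_pi (m * 2)
          push_cast at this
          rw [mul_assoc] at this
          simp [this])
      rw [this, zero_mul]
  · have h := jacobi_gen α β hX hβ m 0
    have hd : ddP m ≠ 0 := by
      unfold ddP; exact Finset.prod_ne_zero_iff.2 (fun i _ => by positivity)
    have hf : (-2 : ℝ) ^ m * ffP m ((0 : ℕ) - 1 / 2) = ddP m := by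
      unfold ffP ddP
      rw [← Finset.card_range m, ← Finset.prod_const, Finset.card_range, ← Finset.prod_mul_distrib]
      apply Finset.prod_congr rfl
      intro i _
      push_cast; ring
    have e1 : ((0 : ℕ) : ℝ) - 1 / 2 = -1 / 2 := by norm_num
    have e2 : -1 / 2 - (m : ℝ) = -(m : ℝ) - 1 / 2 := by ring
    rw [mul_pow] at h
    have h2 : ddP m * cI α β m (((0 : ℕ) : ℝ) - 1 / 2) = ddP m * (β ^ m * dI α β m (((0 : ℕ) : ℝ) - 1 / 2 - m)) := by
      rw [h, ← hf]; ring
    have := mul_left_cancel₀ hd h2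
    rwa [e1, e2] at this

/-- inner integral after substitution -/
def hIn (n m : ℕ) (A B η τ : ℝ) : ℝ :=
  ∫ θ in (0 : ℝ)..π, (sin θ ^ (m + 1) * (legD n m).eval (cos θ)) * xk A B η θ τ ^ (-1 / 2 : ℝ)

lemma xkq_cont (A B η q : ℝ) (hpos : ∀ θ t, 0 < xk A B η θ t) :
    Continuous (fun z : ℝ × ℝ => xk A B η z.1 z.2 ^ q) :=
  Continuous.rpow_const (by unfold xk; fun_prop) (fun z => Or.inl (hpos z.1 z.2).ne')

lemma hIn_int_cont (n m : ℕ) (A B η : ℝ) (hpos : ∀ θ t, 0 < xk A B η θ t) :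
    Continuous (fun z : ℝ × ℝ => (sin z.1 ^ (m + 1) * (legD n m).eval (cos z.1)) *
      xk A B η z.1 z.2 ^ (-1 / 2 : ℝ)) := by
  have h1 := xkq_cont A B η (-1 / 2) hpos
  have h2 : Continuous (fun x => (legD n m).eval x) := (legD n m).continuous
  fun_prop

lemma hIn_cont (n m : ℕ) (A B η : ℝ) (hpos : ∀ θ t, 0 < xk A B η θ t) :
    Continuous (hIn n m A B η) := by
  have h1 : Continuous (fun z : ℝ × ℝ => xk A B η z.2 z.1 ^ (-1 / 2 : ℝ)) :=
    Continuous.rpow_const (by unfold xk; fun_prop) (fun z => Or.inl (hpos z.2 z.1).ne')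
  have h2 : Continuous (fun x => (legD n m).eval x) := (legD n m).continuous
  have h : Continuous (fun z : ℝ × ℝ => (sin z.2 ^ (m + 1) * (legD n m).eval (cos z.2)) *
      xk A B η z.2 z.1 ^ (-1 / 2 : ℝ)) := by fun_prop
  exact intervalIntegral.continuous_parametric_intervalIntegral_of_continuous'
    (f := fun τ θ => (sin θ ^ (m + 1) * (legD n m).eval (cos θ)) *
      xk A B η θ τ ^ (-1 / 2 : ℝ)) h 0 π

lemma cos_hIn (n m : ℕ) (hm : m ≤ n) (u v η : ℝ) (hu : 1 < u) (hv : v ∈ Set.Ioo (-1 : ℝ) 1)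
    (hη0 : 0 < η) (hη : cosh η < u) :
    ∫ τ in (0 : ℝ)..(2 * π), cos (m * τ) * hIn n m (√(u ^ 2 - 1) * √(1 - v ^ 2)) (u * v) η τ
    = (√(u ^ 2 - 1) * √(1 - v ^ 2)) ^ m * sinh η ^ m *
     (4 * π * (-1) ^ m * ((n - m).factorial / (n + m).factorial) * (legD n m).eval (cosh η) *
      iteratedDeriv m (legendreQ n) u * (legD n m).eval v) := by
  rw [← sep_formula n m hm u v η hu hv hη0 hη]
  have hpos : ∀ θ t, 0 < xk (√(u ^ 2 - 1) * √(1 - v ^ 2)) (u * v) η θ t :=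
    fun θ t => xk_pos u v η θ t hu hv hη
  generalize √(u ^ 2 - 1) * √(1 - v ^ 2) = A at *
  generalize u * v = B at *
  have c1 := hIn_int_cont n m A B η hpos
  have c2 := xkq_cont A B η (-(m : ℝ) - 1 / 2) hpos
  have cw := wgt_cont n m
  unfold hIn
  simp only [← intervalIntegral.integral_const_mul]
  rw [← fubini_swap 0 π 0 (2 * π) pi_pos.le (by positivity)
    (fun θ τ => cos (m * τ) * ((sin θ ^ (m + 1) * (legD n m).eval (cos θ)) * xk A B η θ τ ^ (-1 / 2 : ℝ)))
    (Continuous.continuousOn (by fun_prop))]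
  rw [fubini_rect 0 π 0 (2 * π) pi_pos.le (by positivity)
    (fun θ τ => wgt n m (θ, τ) * xk A B η θ τ ^ (-(m : ℝ) - 1 / 2)) (cw.mul c2).continuousOn,
    ← intervalIntegral.integral_const_mul]
  congr 1
  funext θ
  have hx : ∀ t, xk A B η θ t = (A ^ 2 + B ^ 2 + (sinh η * sin θ) ^ 2 + (cosh η * cos θ) ^ 2
      - 2 * B * (cosh η * cos θ)) - 2 * (A * (sinh η * sin θ)) * cos t := fun t => by
    unfold xk; ring
  have hj := jacobi (A ^ 2 + B ^ 2 + (sinh η * sin θ) ^ 2 + (cosh η * cos θ) ^ 2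
      - 2 * B * (cosh η * cos θ)) (A * (sinh η * sin θ)) (fun t => by rw [← hx]; exact hpos θ t) m
  unfold cI dI at hj
  simp only [← hx] at hj
  have e1 : ∀ τ, cos (m * τ) * ((sin θ ^ (m + 1) * (legD n m).eval (cos θ)) * xk A B η θ τ ^ (-1 / 2 : ℝ))
    = (sin θ ^ (m + 1) * (legD n m).eval (cos θ)) * (cos (m * τ) * xk A B η θ τ ^ (-1 / 2 : ℝ)) :=
    fun τ => by ring
  have e2 : ∀ τ, wgt n m (θ, τ) * xk A B η θ τ ^ (-(m : ℝ) - 1 / 2)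
    = (sin θ ^ (2 * m + 1) * (legD n m).eval (cos θ)) *
      (sin τ ^ (2 * m) * xk A B η θ τ ^ (-(m : ℝ) - 1 / 2)) :=
    fun τ => by simp only [wgt]; ring
  simp only [e1, e2]
  rw [intervalIntegral.integral_const_mul, intervalIntegral.integral_const_mul, hj]
  ring

lemma four_shift (m : ℕ) (φ : ℝ) (H : ℝ → ℝ) (hc : Continuous H) (hp : ∀ τ, H (τ + 2 * π) = H τ)
    (he : ∀ τ, H (-τ) = H τ) :
    ∫ t in (0 : ℝ)..(2 * π), ((H (φ - t) : ℝ) : ℂ) * Complex.exp (Complex.I * m * t)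
    = Complex.exp (Complex.I * m * φ) * ((∫ τ in (0 : ℝ)..(2 * π), cos (m * τ) * H τ : ℝ) : ℂ) := by
  have hexp : ∀ x : ℝ, Complex.exp (Complex.I * m * ((x + 2 * π : ℝ) : ℂ)) = Complex.exp (Complex.I * m * x) := by
    intro x
    have : Complex.I * m * ((x + 2 * π : ℝ) : ℂ) = Complex.I * m * x + m * (2 * π * Complex.I) := by
      push_cast; ring
    rw [this, Complex.exp_add, Complex.exp_nat_mul_two_pi_mul_I, mul_one]
  have hexp' : ∀ x : ℝ, Complex.exp (-(Complex.I * m * ((x + 2 * π : ℝ) : ℂ))) = Complex.exp (-(Complex.I * m * x)) := by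
    intro x; rw [Complex.exp_neg, Complex.exp_neg, hexp]
  set G : ℝ → ℂ := fun τ => (H τ : ℂ) * Complex.exp (-(Complex.I * m * τ)) with hG
  have hGp : Function.Periodic G (2 * π) := by
    intro x; simp only [hG]; rw [hp, hexp']
  have hper : ∀ d : ℝ, ∫ t in (0 : ℝ)..(2 * π), G (d - t) = ∫ τ in (0 : ℝ)..(2 * π), G τ := by
    intro d
    rw [intervalIntegral.integral_comp_sub_left G d]
    have := hGp.intervalIntegral_add_eq (d - 2 * π) 0
    rw [sub_add_cancel, zero_add] at this
    rw [sub_zero, this]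
  have h1 : ∀ t : ℝ, ((H (φ - t) : ℝ) : ℂ) * Complex.exp (Complex.I * m * t)
      = Complex.exp (Complex.I * m * φ) * G (φ - t) := by
    intro t
    simp only [hG]
    have : Complex.exp (Complex.I * m * t) = Complex.exp (Complex.I * m * φ) *
        Complex.exp (-(Complex.I * m * ((φ - t : ℝ) : ℂ))) := by
      rw [← Complex.exp_add]; congr 1; push_cast; ring
    rw [this]; ring
  simp only [h1]
  rw [intervalIntegral.integral_const_mul, hper]
  congr 1
  have h2 : ∫ τ in (0 : ℝ)..(2 * π), G τ = ∫ τ in (0 : ℝ)..(2 * π), G (-τ) := by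
    have := hper 0
    simp only [zero_sub] at this
    exact this.symm
  have cG : Continuous G := by simp only [hG]; fun_prop
  have cG' : Continuous (fun τ => G (-τ)) := cG.comp continuous_neg
  have h3 : (2 : ℂ) * ∫ τ in (0 : ℝ)..(2 * π), G τ = 2 * ((∫ τ in (0 : ℝ)..(2 * π), cos (m * τ) * H τ : ℝ) : ℂ) := by
    rw [two_mul]
    nth_rewrite 2 [h2]
    rw [← intervalIntegral.integral_add (cG.intervalIntegrable _ _)
      (cG'.intervalIntegrable _ _), ← intervalIntegral.integral_ofReal,
      ← intervalIntegral.integral_const_mul]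
    congr 1
    funext τ
    simp only [hG, he]
    push_cast
    rw [Complex.cos]
    have e1 : -(Complex.I * m * -(τ : ℂ)) = (m : ℂ) * τ * Complex.I := by ring
    have e2 : -(Complex.I * m * (τ : ℂ)) = -((m : ℂ) * τ) * Complex.I := by ring
    rw [e1, e2]
    ring
  exact mul_left_cancel₀ two_ne_zero h3

lemma norm_prolate_sub (a u v φ η θ t : ℝ) (ha : 0 < a) (hη0 : 0 < η)
    (hθ : 0 ≤ sin θ) :
    ‖prolate a u v φ - prolate a (cosh η) (cos θ) t‖
      = a * √(xk (√(u ^ 2 - 1) * √(1 - v ^ 2)) (u * v) η θ (φ - t)) := by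
  have h1 : √(1 - cos θ ^ 2) = sin θ := by
    rw [← Real.sin_sq, sqrt_sq hθ]
  have h2 : √(cosh η ^ 2 - 1) = sinh η := by
    rw [cosh_sq, add_sub_cancel_right, sqrt_sq (sinh_nonneg_iff.2 hη0.le)]
  rw [EuclideanSpace.norm_eq, Fin.sum_univ_three]
  simp only [prolate, h1, h2]
  conv_rhs => rw [← sqrt_sq ha.le, ← sqrt_mul (sq_nonneg a)]
  congr 1
  simp [xk, cos_sub]
  have e1 := sin_sq_add_cos_sq φ
  have e2 := sin_sq_add_cos_sq t
  generalize √(u ^ 2 - 1) = p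
  generalize √(1 - v ^ 2) = q
  linear_combination (a ^ 2 * p ^ 2 * q ^ 2) * e1 + (a ^ 2 * sinh η ^ 2 * sin θ ^ 2) * e2

lemma norm_pos_ext (a u v φ η s t : ℝ) (ha : 0 < a) (hη0 : 0 < η) (hη : cosh η < u)
    (hv : v ∈ Set.Ioo (-1 : ℝ) 1) (hs : s ∈ Set.Icc (-1 : ℝ) 1) :
    0 < ‖prolate a u v φ - prolate a (cosh η) s t‖ := by
  have hu : 1 < u := lt_of_le_of_lt (one_le_cosh η) hη
  rw [← cos_arccos hs.1 hs.2, norm_prolate_sub a u v φ η _ t ha hη0 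
    (sin_nonneg_of_nonneg_of_le_pi (arccos_nonneg s) (arccos_le_pi s))]
  have := xk_pos u v η (arccos s) (φ - t) hu hv hη
  positivity

lemma prolate_cont (a u₀ : ℝ) : Continuous (fun z : ℝ × ℝ => prolate a u₀ z.1 z.2) := by
  unfold prolate
  refine (PiLp.continuous_toLp 2 _).comp ?_
  refine continuous_pi fun i => ?_
  fin_cases i <;> simp <;> fun_prop

lemma inner_closed (n m : ℕ) (a u v φ η t : ℝ) (ha : 0 < a) (hη0 : 0 < η) (hη : cosh η < u)
    (hv : v ∈ Set.Ioo (-1 : ℝ) 1) :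
    ∫ s in (-1 : ℝ)..1, √(1 - s ^ 2) ^ m * (legD n m).eval s *
      ‖prolate a u v φ - prolate a (cosh η) s t‖⁻¹
    = a⁻¹ * hIn n m (√(u ^ 2 - 1) * √(1 - v ^ 2)) (u * v) η (φ - t) := by
  have hu : 1 < u := lt_of_le_of_lt (one_le_cosh η) hη
  have hpc : Continuous (fun s => prolate a (cosh η) s t) :=
    (prolate_cont a (cosh η)).comp (continuous_id.prodMk continuous_const)
  rw [← cos_subst (fun s => √(1 - s ^ 2) ^ m * (legD n m).eval s *
      ‖prolate a u v φ - prolate a (cosh η) s t‖⁻¹)]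
  · unfold hIn
    rw [← intervalIntegral.integral_const_mul]
    refine intervalIntegral.integral_congr fun θ hθ => ?_
    rw [Set.uIcc_of_le pi_pos.le] at hθ
    have hs := sin_nonneg_of_nonneg_of_le_pi hθ.1 hθ.2
    have h1 : √(1 - cos θ ^ 2) = sin θ := by
      rw [← Real.sin_sq, sqrt_sq hs]
    have hx := xk_pos u v η θ (φ - t) hu hv hη
    simp only [norm_prolate_sub a u v φ η θ t ha hη0 hs, h1]
    have : xk (√(u ^ 2 - 1) * √(1 - v ^ 2)) (u * v) η θ (φ - t) ^ (-1 / 2 : ℝ)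
      = (√(xk (√(u ^ 2 - 1) * √(1 - v ^ 2)) (u * v) η θ (φ - t)))⁻¹ := by
      rw [sqrt_eq_rpow (xk _ _ _ _ _), ← rpow_neg hx.le]; norm_num
    rw [this, mul_inv]
    ring
  · refine ContinuousOn.mul ?_ ?_
    · have h2 : Continuous (fun x => (legD n m).eval x) := (legD n m).continuous
      exact Continuous.continuousOn (by fun_prop)
    · refine ContinuousOn.inv₀ (Continuous.continuousOn (by fun_prop)) fun s hs => ?_
      exact (norm_pos_ext a u v φ η s t ha hη0 hη hv hs).ne'

/-- density -/
def dens (n m : ℕ) (u₀ : ℝ) : ℝ → ℝ → ℂ :=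
  fun s t => sphY n m s t / ((Real.sqrt (u₀ ^ 2 - s ^ 2) : ℝ) : ℂ)

/-- normalisation -/
def nrm (n m : ℕ) : ℝ := Real.sqrt ((2 * (n : ℝ) + 1) / (4 * Real.pi)) *
      Real.sqrt (((n - m).factorial : ℝ) / ((n + m).factorial : ℝ))

lemma integrand_eq (n m : ℕ) (a u₀ s t : ℝ) (hu₀ : 1 < u₀) (hs : s ∈ Set.Icc (-1 : ℝ) 1)
    (x : EuclideanSpace ℝ (Fin 3)) :
    ((areaElemP a u₀ s / (4 * Real.pi * ‖x - prolate a u₀ s t‖) : ℝ) : ℂ) * dens n m u₀ s t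
    = ((a ^ 2 * √(u₀ ^ 2 - 1) / (4 * π) * nrm n m *
        (√(1 - s ^ 2) ^ m * (legD n m).eval s * ‖x - prolate a u₀ s t‖⁻¹) : ℝ) : ℂ) *
        Complex.exp (Complex.I * m * t) := by
  have h0 : 0 < √(u₀ ^ 2 - s ^ 2) := sqrt_pos.2 (by nlinarith [hs.1, hs.2])
  have : ((areaElemP a u₀ s / (4 * Real.pi * ‖x - prolate a u₀ s t‖) : ℝ)) * nrm n m *
     ferrersP n m s / √(u₀ ^ 2 - s ^ 2) =
     (a ^ 2 * √(u₀ ^ 2 - 1) / (4 * π) * nrm n m *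
        (√(1 - s ^ 2) ^ m * (legD n m).eval s * ‖x - prolate a u₀ s t‖⁻¹)) := by
    unfold areaElemP ferrersP
    rw [iteratedDeriv_legendreP]
    generalize ‖x - prolate a u₀ s t‖ = r
    simp only [div_eq_mul_inv, mul_inv]
    have := mul_inv_cancel₀ h0.ne'
    linear_combination (a ^ 2 * √(u₀ ^ 2 - 1) * 4⁻¹ * π⁻¹ * r⁻¹ * nrm n m * 
      √(1 - s ^ 2) ^ m * (legD n m).eval s) * this
  rw [← this]
  unfold dens sphY nrm
  push_cast
  ring

lemma closed_form (n m : ℕ) (hm : m ≤ n) (a u₀ u v φ : ℝ) (ha : 0 < a) (hu₀ : 1 < u₀) (hu : u₀ < u)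
    (hv : v ∈ Set.Ioo (-1 : ℝ) 1) :
    singleLayerP a u₀ (dens n m u₀) (prolate a u v φ)
    = ((a * √(u₀ ^ 2 - 1) * (-1) ^ m * ((n - m).factorial / (n + m).factorial) *
      assocP n m u₀ * assocQ n m u : ℝ) : ℂ) * sphY n m v φ := by
  obtain ⟨η, hη0, rfl⟩ : ∃ η, 0 < η ∧ u₀ = cosh η := by
    refine ⟨arcosh u₀, lt_of_le_of_ne (arcosh_nonneg hu₀.le) ?_, (cosh_arcosh hu₀.le).symm⟩
    intro h
    have := (arcosh_eq_zero_iff hu₀.le).1 h.symm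
    linarith
  have hu1 : 1 < u := hu₀.trans hu
  have h2 : √(cosh η ^ 2 - 1) = sinh η := by
    rw [cosh_sq, add_sub_cancel_right, sqrt_sq (sinh_nonneg_iff.2 hη0.le)]
  have hpos : ∀ θ t, 0 < xk (√(u ^ 2 - 1) * √(1 - v ^ 2)) (u * v) η θ t :=
    fun θ t => xk_pos u v η θ t hu1 hv hu
  have hin : ∀ t : ℝ, ∫ s in (-1 : ℝ)..1,
    ((areaElemP a (cosh η) s / (4 * Real.pi * ‖prolate a u v φ - prolate a (cosh η) s t‖) : ℝ) : ℂ) * dens n m (cosh η) s t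
    = ((a ^ 2 * √(cosh η ^ 2 - 1) / (4 * π) * nrm n m * a⁻¹ : ℝ) : ℂ) * (
      ((hIn n m (√(u ^ 2 - 1) * √(1 - v ^ 2)) (u * v) η (φ - t) : ℝ) : ℂ) * Complex.exp (Complex.I * m * t)) := by
    intro t
    rw [intervalIntegral.integral_congr (g := fun s => ((a ^ 2 * √(cosh η ^ 2 - 1) / (4 * π) * nrm n m *
        (√(1 - s ^ 2) ^ m * (legD n m).eval s * ‖prolate a u v φ - prolate a (cosh η) s t‖⁻¹) : ℝ) : ℂ) *
        Complex.exp (Complex.I * m * t))]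
    · rw [intervalIntegral.integral_mul_const, intervalIntegral.integral_ofReal,
        intervalIntegral.integral_const_mul, inner_closed n m a u v φ η t ha hη0 hu hv]
      push_cast; ring
    · intro s hs
      rw [Set.uIcc_of_le (by norm_num)] at hs
      exact integrand_eq n m a _ s t hu₀ hs _
  unfold singleLayerP
  simp only [hin]
  rw [intervalIntegral.integral_const_mul,
    four_shift m φ (hIn n m (√(u ^ 2 - 1) * √(1 - v ^ 2)) (u * v) η) (hIn_cont n m _ _ η hpos)
    (fun τ => by unfold hIn xk; simp only [cos_add_two_pi])
    (fun τ => by unfold hIn xk; simp only [cos_neg]),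
    cos_hIn n m hm u v η hu1 hv hη0 hu]
  unfold assocP assocQ sphY ferrersP
  rw [iteratedDeriv_legendreP, h2]
  have e : (a ^ 2 * sinh η / (4 * π) * nrm n m * a⁻¹) * ((√(u ^ 2 - 1) * √(1 - v ^ 2)) ^ m * sinh η ^ m *
     (4 * π * (-1) ^ m * ((n - m).factorial / (n + m).factorial) * (legD n m).eval (cosh η) *
      iteratedDeriv m (legendreQ n) u * (legD n m).eval v)) = 
      (a * sinh η * (-1) ^ m * ((n - m).factorial / (n + m).factorial) *
      (sinh η ^ m * (legD n m).eval (cosh η)) * (√(u ^ 2 - 1) ^ m * iteratedDeriv m (legendreQ n) u)) *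
      (nrm n m * (√(1 - v ^ 2) ^ m * (legD n m).eval v)) := by
    have := pi_pos
    field_simp
    ring
  have e' := congrArg (fun r : ℝ => (r : ℂ)) e
  simp only [Complex.ofReal_mul (a ^ 2 * sinh η / (4 * π) * nrm n m * a⁻¹) _] at e'
  rw [mul_left_comm, e', Complex.ofReal_mul]
  unfold nrm
  ring

/-- smooth part of the integrand -/
def wden (n m : ℕ) (a u₀ : ℝ) (z : ℝ × ℝ) : ℂ :=
  ((a ^ 2 * √(u₀ ^ 2 - 1) / (4 * π) * nrm n m * (√(1 - z.2 ^ 2) ^ m * (legD n m).eval z.2) : ℝ) : ℂ)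
    * Complex.exp (Complex.I * m * z.1)

lemma wden_cont (n m : ℕ) (a u₀ : ℝ) : Continuous (wden n m a u₀) := by
  have h2 : Continuous (fun x => (legD n m).eval x) := (legD n m).continuous
  unfold wden
  fun_prop

lemma SL_eq (n m : ℕ) (a u₀ : ℝ) (hu₀ : 1 < u₀) (x : EuclideanSpace ℝ (Fin 3)) :
    singleLayerP a u₀ (dens n m u₀) x = ∫ t in (0 : ℝ)..(2 * Real.pi), ∫ s in (-1 : ℝ)..1,
      (‖x - prolate a u₀ s t‖⁻¹ : ℝ) • wden n m a u₀ (t, s) := by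
  unfold singleLayerP
  congr 1
  funext t
  refine intervalIntegral.integral_congr fun s hs => ?_
  rw [Set.uIcc_of_le (by norm_num)] at hs
  rw [integrand_eq n m a u₀ s t hu₀ hs x]
  simp only [wden, Complex.real_smul]
  push_cast
  ring

/-- derivative of inverse norm -/
def dInv (p : EuclideanSpace ℝ (Fin 3)) : EuclideanSpace ℝ (Fin 3) →L[ℝ] ℝ :=
  fderiv ℝ (fun x : EuclideanSpace ℝ (Fin 3) => ‖x‖⁻¹) p

lemma cd_inv : ContDiffOn ℝ 1 (fun x : EuclideanSpace ℝ (Fin 3) => ‖x‖⁻¹) {0}ᶜ := by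
  intro x hx
  have h : x ≠ 0 := hx
  exact ((contDiffAt_norm ℝ h).inv (norm_ne_zero_iff.2 h)).contDiffWithinAt

lemma dInv_has (p : EuclideanSpace ℝ (Fin 3)) (hp : p ≠ 0) :
    HasFDerivAt (fun x : EuclideanSpace ℝ (Fin 3) => ‖x‖⁻¹) (dInv p) p :=
  (((contDiffAt_norm (n := 1) ℝ hp).inv (norm_ne_zero_iff.2 hp)).differentiableAt
    (by norm_num)).hasFDerivAt

lemma dInv_cont : ContinuousOn dInv {0}ᶜ :=
  cd_inv.continuousOn_fderiv_of_isOpen isOpen_compl_singleton le_rfl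

lemma SL_diff (n m : ℕ) (a u₀ : ℝ) (hu₀ : 1 < u₀) (x₀ : EuclideanSpace ℝ (Fin 3))
    (hx : ∀ s ∈ Set.Icc (-1 : ℝ) 1, ∀ t, x₀ ≠ prolate a u₀ s t) :
    DifferentiableAt ℝ (singleLayerP a u₀ (dens n m u₀)) x₀ := by
  let K : Set (ℝ × ℝ) := Set.Icc 0 (2 * π) ×ˢ Set.Icc (-1) 1
  have hK : IsCompact K := isCompact_Icc.prod isCompact_Icc
  have hpc : Continuous (fun z : ℝ × ℝ => prolate a u₀ z.2 z.1) :=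
    (prolate_cont a u₀).comp (continuous_snd.prodMk continuous_fst)
  let U : Set (EuclideanSpace ℝ (Fin 3)) := ((fun z : ℝ × ℝ => prolate a u₀ z.2 z.1) '' K)ᶜ
  have hU : IsOpen U := (hK.image hpc).isClosed.isOpen_compl
  have hx₀ : x₀ ∈ U := by
    rintro ⟨z, hz, h⟩
    exact hx z.2 hz.2 z.1 h.symm
  have hne : ∀ x ∈ U, ∀ z ∈ K, x - prolate a u₀ z.2 z.1 ≠ 0 := by
    intro x hx z hz h
    exact hx ⟨z, hz, (sub_eq_zero.1 h).symm⟩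
  have hwc := wden_cont n m a u₀
  have hF : ∀ x ∈ U, ContinuousOn
      (fun z : ℝ × ℝ => (‖x - prolate a u₀ z.2 z.1‖⁻¹ : ℝ) • wden n m a u₀ z) K := by
    intro x hx
    have hi : ContinuousOn (fun z : ℝ × ℝ => ‖x - prolate a u₀ z.2 z.1‖⁻¹) K := by
      refine ContinuousOn.inv₀ (Continuous.continuousOn (by fun_prop)) fun z hz => ?_
      exact norm_ne_zero_iff.2 (hne x hx z hz)
    exact hi.smul hwc.continuousOn
  have key := param_fderiv (volume : Measure (ℝ × ℝ)) K hK U hU x₀ hx₀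
    (fun x z => (‖x - prolate a u₀ z.2 z.1‖⁻¹ : ℝ) • wden n m a u₀ z)
    (fun x z => (dInv (x - prolate a u₀ z.2 z.1)).smulRight (wden n m a u₀ z))
    hF ?_ ?_
  · refine (key.differentiableAt).congr_of_eventuallyEq ?_
    filter_upwards [hU.mem_nhds hx₀] with x hx
    rw [SL_eq n m a u₀ hu₀, ← fubini_rect 0 (2 * π) (-1) 1 (by positivity) (by norm_num)
      (fun t s => (‖x - prolate a u₀ s t‖⁻¹ : ℝ) • wden n m a u₀ (t, s)) (hF x hx)]
  · refine (isBoundedBilinearMap_smulRight (𝕜 := ℝ) (E := EuclideanSpace ℝ (Fin 3)) (F := ℂ)).continuous.comp_continuousOn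
      (f := fun z : EuclideanSpace ℝ (Fin 3) × (ℝ × ℝ) =>
        (dInv (z.1 - prolate a u₀ z.2.2 z.2.1), wden n m a u₀ z.2)) ?_
    refine ContinuousOn.prodMk ?_ (hwc.comp continuous_snd).continuousOn
    refine dInv_cont.comp (Continuous.continuousOn ?_) ?_
    · exact continuous_fst.sub (hpc.comp continuous_snd)
    · intro z hz
      exact hne z.1 hz.1 z.2 hz.2
  · intro x hx z hz
    have h1 := (dInv_has _ (hne x hx z hz)).comp x ((hasFDerivAt_id x).sub_const (prolate a u₀ z.2 z.1))
    have h2 := h1.smul_const (wden n m a u₀ z)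
    simpa [Function.comp_def] using h2

lemma SL_diff_ext (n m : ℕ) (a u₀ u v φ : ℝ) (ha : 0 < a) (hu₀ : 1 < u₀) (hu : u₀ < u)
    (hv : v ∈ Set.Ioo (-1 : ℝ) 1) :
    DifferentiableAt ℝ (singleLayerP a u₀ (dens n m u₀)) (prolate a u v φ) := by
  refine SL_diff n m a u₀ hu₀ _ fun s hs t h => ?_
  obtain ⟨η, hη0, rfl⟩ : ∃ η, 0 < η ∧ u₀ = cosh η := by
    refine ⟨arcosh u₀, lt_of_le_of_ne (arcosh_nonneg hu₀.le) ?_, (cosh_arcosh hu₀.le).symm⟩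
    intro h
    have := (arcosh_eq_zero_iff hu₀.le).1 h.symm
    linarith
  have := norm_pos_ext a u v φ η s t ha hη0 hu hv hs
  rw [h, sub_self, norm_zero] at this
  exact this.false

lemma hasDerivAt_sqrt_u (u : ℝ) (hu : 1 < u) :
    HasDerivAt (fun w : ℝ => √(w ^ 2 - 1)) (u / √(u ^ 2 - 1)) u := by
  have h := ((hasDerivAt_id u).fun_pow 2).sub_const 1
  have := h.sqrt (by simp; nlinarith)
  refine HasDerivAt.congr_deriv this ?_
  simp
  field_simp

lemma hasDerivAt_prolate (a u v φ : ℝ) (hu : 1 < u) :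
    HasDerivAt (fun w => prolate a w v φ) ((WithLp.equiv 2 (Fin 3 → ℝ)).symm
    ![a * (u / √(u ^ 2 - 1)) * √(1 - v ^ 2) * cos φ,
      a * (u / √(u ^ 2 - 1)) * √(1 - v ^ 2) * sin φ,
      a * v]) u := by
  have hs := hasDerivAt_sqrt_u u hu
  have : HasDerivAt (fun w : ℝ => ![a * √(w ^ 2 - 1) * √(1 - v ^ 2) * cos φ,
      a * √(w ^ 2 - 1) * √(1 - v ^ 2) * sin φ,
      a * w * v]) ![a * (u / √(u ^ 2 - 1)) * √(1 - v ^ 2) * cos φ,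
      a * (u / √(u ^ 2 - 1)) * √(1 - v ^ 2) * sin φ,
      a * v] u := by
    rw [hasDerivAt_pi]
    intro i
    fin_cases i
    · simpa using ((hs.const_mul a).mul_const (√(1 - v ^ 2))).mul_const (cos φ)
    · simpa using ((hs.const_mul a).mul_const (√(1 - v ^ 2))).mul_const (sin φ)
    · simpa using ((hasDerivAt_id u).const_mul a).mul_const v
  exact ((PiLp.continuousLinearEquiv 2 ℝ (fun _ : Fin 3 => ℝ)).symm.hasFDerivAt).comp_hasDerivAt u this

lemma norm_deriv_prolate (a u v φ : ℝ) (ha : 0 < a) (hu : 1 < u) (hv : v ∈ Set.Ioo (-1 : ℝ) 1) :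
    ‖deriv (fun w => prolate a w v φ) u‖ = a * √(u ^ 2 - v ^ 2) / √(u ^ 2 - 1) := by
  rw [(hasDerivAt_prolate a u v φ hu).deriv, EuclideanSpace.norm_eq, Fin.sum_univ_three]
  have h1 : 0 < u ^ 2 - 1 := by nlinarith
  have h2 : 0 < 1 - v ^ 2 := by nlinarith [hv.1, hv.2]
  rw [← sqrt_sq ha.le, ← sqrt_mul (sq_nonneg a), ← sqrt_div (by nlinarith [sq_nonneg a]), sqrt_sq ha.le]
  congr 1
  have e := sq_sqrt h1.le
  have e' := sq_sqrt h2.le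
  have e1 := sin_sq_add_cos_sq φ
  have : (a * (u / √(u ^ 2 - 1)) * √(1 - v ^ 2) * cos φ) ^ 2 + (a * (u / √(u ^ 2 - 1)) * √(1 - v ^ 2) * sin φ) ^ 2
     + (a * v) ^ 2 = a ^ 2 * (u ^ 2 - v ^ 2) / (u ^ 2 - 1) := by
    have : (a * (u / √(u ^ 2 - 1)) * √(1 - v ^ 2) * cos φ) ^ 2 + (a * (u / √(u ^ 2 - 1)) * √(1 - v ^ 2) * sin φ) ^ 2
      = a ^ 2 * (u ^ 2 / (u ^ 2 - 1)) * (1 - v ^ 2) := by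
      conv_rhs => rw [← e, ← e']
      simp only [div_pow, mul_pow]
      linear_combination (a ^ 2 * (u ^ 2 / √(u ^ 2 - 1) ^ 2) * √(1 - v ^ 2) ^ 2) * e1
    rw [this]
    field_simp
    ring
  rw [← this]
  simp only [Real.norm_eq_abs, sq_abs]
  simp

/-- derivative of assocQ -/
def dQ (n m : ℕ) (u : ℝ) : ℝ :=
  (m : ℝ) * √(u ^ 2 - 1) ^ (m - 1) * (u / √(u ^ 2 - 1)) * ((1 / 2) * (-1) ^ m * m.factorial * qInt n m u)
   + √(u ^ 2 - 1) ^ m * ((1 / 2) * (-1) ^ m * m.factorial * (-((m : ℝ) + 1) * qInt n (m + 1) u))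

lemma hasDerivAt_assocQ (n m : ℕ) (u : ℝ) (hu : 1 < u) : HasDerivAt (assocQ n m) (dQ n m u) u := by
  have h1 := (hasDerivAt_sqrt_u u hu).fun_pow m
  have h2 := (hasDerivAt_qInt n m u hu).const_mul ((1 / 2) * (-1) ^ m * (m.factorial : ℝ))
  have h3 := h1.fun_mul h2
  have h4 := h3.congr_of_eventuallyEq (f₁ := assocQ n m) ?_
  · exact h4
  · filter_upwards [lt_mem_nhds hu] with w hw
    unfold assocQ
    rw [iteratedDeriv_legendreQ n m w hw]

lemma dQ_cont (n m : ℕ) (u : ℝ) (hu : 1 < u) : ContinuousAt (dQ n m) u := by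
  have h1 := (hasDerivAt_qInt n m u hu).continuousAt
  have h2 := (hasDerivAt_qInt n (m + 1) u hu).continuousAt
  have h3 : √(u ^ 2 - 1) ≠ 0 := (sqrt_pos.2 (by nlinarith)).ne'
  unfold dQ
  fun_prop (disch := assumption)

theorem main_lim (a : ℝ) (ha : 0 < a) (u₀ : ℝ)
    (hu₀ : 1 < u₀) (n m : ℕ) (hm : m ≤ n) (v φ : ℝ) (hv : v ∈ Set.Ioo (-1 : ℝ) 1) :
    Filter.Tendsto
      (fun u : ℝ =>
        fderiv ℝ
          (singleLayerP a u₀ (dens n m u₀))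
          (prolate a u v φ)
          (‖deriv (fun w => prolate a w v φ) u‖⁻¹ • deriv (fun w => prolate a w v φ) u))
      (nhdsWithin u₀ (Set.Ioi u₀))
      (nhds (((((n - m).factorial : ℝ) / ((n + m).factorial : ℝ)) * (-1 : ℝ) ^ m *
          (u₀ ^ 2 - 1) * assocP n m u₀ * deriv (assocQ n m) u₀ /
            Real.sqrt (u₀ ^ 2 - v ^ 2) : ℝ) * sphY n m v φ)) := by
  have hval : ∀ u ∈ Set.Ioi u₀, fderiv ℝ
          (singleLayerP a u₀ (dens n m u₀))
          (prolate a u v φ)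
          (‖deriv (fun w => prolate a w v φ) u‖⁻¹ • deriv (fun w => prolate a w v φ) u)
      = (((a * √(u ^ 2 - v ^ 2) / √(u ^ 2 - 1))⁻¹ * (a * √(u₀ ^ 2 - 1) * (-1) ^ m * ((n - m).factorial / (n + m).factorial) *
      assocP n m u₀ * dQ n m u) : ℝ) : ℂ) * sphY n m v φ := by
    intro u hu
    have hu : u₀ < u := hu
    have hu1 : 1 < u := hu₀.trans hu
    rw [map_smul, norm_deriv_prolate a u v φ ha hu1 hv]
    have hd := (hasDerivAt_prolate a u v φ hu1)
    have hc := (SL_diff_ext n m a u₀ u v φ ha hu₀ hu hv).hasFDerivAt.comp_hasDerivAt u hd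
    rw [← hd.deriv] at hc
    have hq := (((hasDerivAt_assocQ n m u hu1).const_mul (a * √(u₀ ^ 2 - 1) * (-1) ^ m * ((n - m).factorial / (n + m).factorial) *
      assocP n m u₀)).ofReal_comp).mul_const (sphY n m v φ)
    have hq' := hq.congr_of_eventuallyEq (f₁ := (singleLayerP a u₀ (dens n m u₀)) ∘ fun w => prolate a w v φ) ?_
    · rw [hc.unique hq', Complex.real_smul]
      push_cast
      ring
    · filter_upwards [lt_mem_nhds hu] with w hw
      exact closed_form n m hm a u₀ w v φ ha hu₀ hw hv
  refine Filter.Tendsto.congr' (f₁ := fun u => (((a * √(u ^ 2 - v ^ 2) / √(u ^ 2 - 1))⁻¹ * (a * √(u₀ ^ 2 - 1) * (-1) ^ m * ((n - m).factorial / (n + m).factorial) *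
      assocP n m u₀ * dQ n m u) : ℝ) : ℂ) * sphY n m v φ) ?_ ?_
  · filter_upwards [self_mem_nhdsWithin] with u hu
    exact (hval u hu).symm
  · have h1 : 0 < √(u₀ ^ 2 - 1) := sqrt_pos.2 (by nlinarith)
    have h2 : 0 < √(u₀ ^ 2 - v ^ 2) := sqrt_pos.2 (by nlinarith [hv.1, hv.2])
    have h3 : a * √(u₀ ^ 2 - v ^ 2) / √(u₀ ^ 2 - 1) ≠ 0 := by positivity
    have hQ := dQ_cont n m u₀ hu₀
    have hc : ContinuousAt (fun u => (a * √(u ^ 2 - v ^ 2) / √(u ^ 2 - 1))⁻¹ * (a * √(u₀ ^ 2 - 1) * (-1) ^ m * ((n - m).factorial / (n + m).factorial) *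
      assocP n m u₀ * dQ n m u)) u₀ := by
      refine ContinuousAt.mul (ContinuousAt.inv₀ ?_ h3) (hQ.const_mul _)
      exact ContinuousAt.div (by fun_prop) (by fun_prop) h1.ne'
    have hl := ((Complex.continuous_ofReal.continuousAt.comp hc).mul_const (sphY n m v φ)).tendsto.mono_left
      (nhdsWithin_le_nhds (s := Set.Ioi u₀))
    convert hl using 2
    simp only [Function.comp]
    congr 2
    rw [(hasDerivAt_assocQ n m u₀ hu₀).deriv]
    have e : u₀ ^ 2 - 1 = √(u₀ ^ 2 - 1) * √(u₀ ^ 2 - 1) := (mul_self_sqrt (by nlinarith)).symm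
    simp only [inv_div]
    conv_lhs => rw [e]
    field_simp

theorem singleLayer_normal_derivative_exterior_limit (a : ℝ) (ha : 0 < a) (u₀ : ℝ)
    (hu₀ : 1 < u₀) (n m : ℕ) (hm : m ≤ n) (v φ : ℝ) (hv : v ∈ Set.Ioo (-1 : ℝ) 1) :
    Filter.Tendsto
      (fun u : ℝ =>
        fderiv ℝ
          (singleLayerP a u₀ (fun s t => sphY n m s t / ((Real.sqrt (u₀ ^ 2 - s ^ 2) : ℝ) : ℂ)))
          (prolate a u v φ)
          (‖deriv (fun w => prolate a w v φ) u‖⁻¹ • deriv (fun w => prolate a w v φ) u))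
      (nhdsWithin u₀ (Set.Ioi u₀))
      (nhds (((((n - m).factorial : ℝ) / ((n + m).factorial : ℝ)) * (-1 : ℝ) ^ m *
          (u₀ ^ 2 - 1) * assocP n m u₀ * deriv (assocQ n m) u₀ /
            Real.sqrt (u₀ ^ 2 - v ^ 2) : ℝ) * sphY n m v φ)) := by
  exact main_lim a ha u₀ hu₀ n m hm v φ hv
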